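/- arXiv:2211.04749 — 2 statements merged into one kernel-verified Lean document; each statement's English description precedes it below -/
import Mathlib

section
/- For positive integers k ≥ 2 and 1 ≤ a ≤ k and any non-negative integer n, the number of partitions of n into parts not congruent to 0, a, or -a modulo 2k+1 equals the number of partitions of n in which the multiplicity of 1 is less than a and for every i the sum of the multiplicities of i and i+1 is less than k. -/
open Finset PowerSeries

section QSeries

variable {R : Type*} [CommRing R]

/-- The `q`-factorial product `(1 - q)(1 - q²)⋯(1 - qⁿ)`. -/
def qPoch (q : R) (n : ℕ) : R := ∏ j ∈ range n, (1 - q ^ (j + 1))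

/-- The Gaussian binomial coefficient, evaluated at `q`. -/
def gaussBinom (q : R) : ℕ → ℕ → R
  | _, 0 => 1
  | 0, _ + 1 => 0
  | n + 1, j + 1 => gaussBinom q n j + q ^ (j + 1) * gaussBinom q n (j + 1)

@[simp]
theorem gaussBinom_zero_right (q : R) (n : ℕ) : gaussBinom q n 0 = 1 := by
  cases n <;> rfl

theorem gaussBinom_succ_succ (q : R) (n j : ℕ) :
    gaussBinom q (n + 1) (j + 1) = gaussBinom q n j + q ^ (j + 1) * gaussBinom q n (j + 1) := rfl

theorem gaussBinom_eq_zero (q : R) {n j : ℕ} (h : n < j) : gaussBinom q n j = 0 := by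
  induction n generalizing j with
  | zero => obtain ⟨j, rfl⟩ := Nat.exists_eq_add_one_of_ne_zero h.ne'; rfl
  | succ n ih =>
    obtain ⟨j, rfl⟩ := Nat.exists_eq_add_one_of_ne_zero (Nat.ne_zero_of_lt h)
    rw [gaussBinom_succ_succ, ih (by omega), ih (by omega)]
    simp

theorem gaussBinom_add_mul_qPoch (q : R) (j m : ℕ) :
    gaussBinom q (j + m) j * qPoch q j * qPoch q m = qPoch q (j + m) := by
  induction j generalizing m with
  | zero => simp [qPoch]
  | succ j ihj =>
    induction m with
    | zero =>
      have h := ihj 0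
      rw [add_zero, gaussBinom_succ_succ, gaussBinom_eq_zero q (Nat.lt_succ_self j)]
      simp only [qPoch, prod_range_succ, add_zero] at h ⊢
      linear_combination (1 - q ^ (j + 1)) * h
    | succ m ihm =>
      have h := ihj (m + 1)
      rw [show j + 1 + (m + 1) = (j + (m + 1)) + 1 by ring, gaussBinom_succ_succ]
      rw [show j + 1 + m = j + (m + 1) by ring] at ihm
      have e1 : qPoch q (j + 1) = qPoch q j * (1 - q ^ (j + 1)) := prod_range_succ _ _
      have e2 : qPoch q (m + 1) = qPoch q m * (1 - q ^ (m + 1)) := prod_range_succ _ _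
      have e3 : qPoch q (j + (m + 1) + 1)
        = qPoch q (j + (m + 1)) * (1 - q ^ (j + (m + 1) + 1)) := prod_range_succ _ _
      rw [e3]
      rw [e2] at h ⊢
      rw [e1] at ihm ⊢
      linear_combination (1 - q ^ (j + 1)) * h + q ^ (j + 1) * (1 - q ^ (m + 1)) * ihm

/-- The (homogeneous) `q`-binomial theorem. -/
theorem prod_add_mul_pow_eq_sum_gaussBinom (q a b : R) (n : ℕ) :
    ∏ j ∈ range n, (a + b * q ^ j)
      = ∑ j ∈ range (n + 1), q ^ (j.choose 2) * gaussBinom q n j * b ^ j * a ^ (n - j) := by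
  induction n generalizing b with
  | zero => simp
  | succ n ih =>
    rw [prod_range_succ', sum_range_succ']
    have h := ih (b * q)
    have e : ∏ j ∈ range n, (a + b * q ^ (j + 1)) = ∏ j ∈ range n, (a + b * q * q ^ j) :=
      prod_congr rfl fun j _ ↦ by ring
    rw [e, h, mul_add, sum_mul, sum_mul]
    have e1 : ∑ j ∈ range (n + 1), q ^ (j.choose 2) * gaussBinom q n j * (b * q) ^ j * a ^ (n - j) * a
        = ∑ j ∈ range (n + 1), q ^ ((j + 1).choose 2 + (j + 1)) * gaussBinom q n (j + 1) * b ^ (j + 1)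
          * a ^ (n - j) + a ^ (n + 1) := by
      rw [sum_range_succ', sum_range_succ, gaussBinom_eq_zero q (show n < n + 1 by omega)]
      simp only [mul_zero, zero_mul, add_zero]
      congr 1
      · refine sum_congr rfl fun j hj ↦ ?_
        rw [show n - j = n - (j + 1) + 1 by grind]
        ring
      · simp [pow_succ]
    rw [e1, add_right_comm, ← sum_add_distrib]
    congr 1
    · refine sum_congr rfl fun j hj ↦ ?_
      rw [gaussBinom_succ_succ, Nat.succ_sub_succ, Nat.choose_succ_succ' j 1, Nat.choose_one_right]
      ring
    · simp

theorem two_mul_choose_two_succ (n : ℕ) : 2 * (n + 1).choose 2 = n * (n + 1) := by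
  rw [Nat.choose_two_right, Nat.mul_div_cancel' (Nat.even_mul_pred_self (n + 1)).two_dvd,
    Nat.add_sub_cancel, mul_comm]

theorem choose_two_succ (n : ℕ) : (n + 1).choose 2 = n.choose 2 + n := by
  rw [Nat.choose_succ_succ' n 1, Nat.choose_one_right, add_comm]

theorem choose_two_add (n l : ℕ) : (n + l).choose 2 = n.choose 2 + n * l + l.choose 2 := by
  induction l with
  | zero => simp
  | succ l ih => rw [← add_assoc, choose_two_succ, ih, choose_two_succ]; ring

/-- A finite form of Jacobi's triple product identity. -/
theorem prod_one_sub_mul_one_sub_eq_sum_gaussBinom [IsDomain R] {z w : R} (hz : z ≠ 0) (hw : w ≠ 0)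
    (n : ℕ) :
    ∏ j ∈ range n, ((1 - z * (z * w) ^ j) * (1 - w * (z * w) ^ j))
      = ∑ l ∈ range (n + 1),
          (-1) ^ l * w ^ l * (z * w) ^ (l.choose 2) * gaussBinom (z * w) (2 * n) (n - l)
        + ∑ l ∈ range n, (-1) ^ (l + 1) * z ^ (l + 1) * (z * w) ^ ((l + 1).choose 2)
            * gaussBinom (z * w) (2 * n) (n + (l + 1)) := by
  set q := z * w with hq
  have hq0 : q ≠ 0 := mul_ne_zero hz hw
  have hne : (-1) ^ n * z ^ n * q ^ (n.choose 2) * q ^ (n * n) ≠ 0 := by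
    simp [hz, hq0]
  apply mul_left_cancel₀ hne
  have key := prod_add_mul_pow_eq_sum_gaussBinom q (q ^ n) (-z) (2 * n)
  have e1 : ∏ j ∈ range (2 * n), (q ^ n + -z * q ^ j)
      = (-1) ^ n * z ^ n * q ^ (n.choose 2) * q ^ (n * n)
        * ∏ j ∈ range n, ((1 - z * q ^ j) * (1 - w * q ^ j)) := by
    rw [two_mul, prod_range_add]
    have h1 : ∏ j ∈ range n, (q ^ n + -z * q ^ j)
        = (-1) ^ n * z ^ n * q ^ (n.choose 2) * ∏ j ∈ range n, (1 - w * q ^ j) := by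
      have h : ∀ j ∈ range n, q ^ n + -z * q ^ j = -1 * z * q ^ j * (1 - w * q ^ (n - 1 - j)) := by
        intro j hj
        have : q ^ n = z * w * (q ^ j * q ^ (n - 1 - j)) := by
          rw [← hq, ← pow_add, ← pow_succ']
          congr 1
          grind
        rw [this]
        ring
      rw [prod_congr rfl h, prod_mul_distrib, prod_mul_distrib, prod_const, prod_pow_eq_pow_sum,
        sum_range_id, ← Nat.choose_two_right, card_range, mul_pow,
        prod_range_reflect (fun j ↦ 1 - w * q ^ j)]
    have h2 : ∏ j ∈ range n, (q ^ n + -z * q ^ (n + j))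
        = q ^ (n * n) * ∏ j ∈ range n, (1 - z * q ^ j) := by
      have h : ∀ j ∈ range n, q ^ n + -z * q ^ (n + j) = q ^ n * (1 - z * q ^ j) :=
        fun j _ ↦ by ring
      rw [prod_congr rfl h, prod_mul_distrib, prod_const, card_range, pow_mul]
    rw [h1, h2, prod_mul_distrib]
    ring
  rw [← e1, key, show 2 * n + 1 = n + 1 + n by ring, sum_range_add, mul_add, mul_sum, mul_sum]
  congr 1
  · rw [← sum_range_reflect]
    refine sum_congr rfl fun l hl ↦ ?_
    obtain ⟨d, rfl⟩ : ∃ d, n = d + l := ⟨n - l, by grind⟩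
    rw [show d + l + 1 - 1 - l = d by omega, show 2 * (d + l) - d = d + 2 * l by omega,
      Nat.add_sub_cancel]
    have h1 : z ^ (d + l) * w ^ l = z ^ d * q ^ l := by rw [hq]; ring
    have h2 : (-1 : R) ^ (d + l) * (-1) ^ l = (-1) ^ d := by
      rw [← pow_add, add_assoc, ← two_mul, pow_add, pow_mul]; simp
    have h3 : d.choose 2 + (d + l) * (d + 2 * l)
      = (d + l).choose 2 + (d + l) * (d + l) + l.choose 2 + l := by
      have := two_mul_choose_two_succ l
      have := choose_two_succ l
      rw [choose_two_add]
      nlinarith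
    have h4 : q ^ (d.choose 2) * (q ^ (d + l)) ^ (d + 2 * l)
      = q ^ ((d + l).choose 2) * q ^ ((d + l) * (d + l)) * q ^ (l.choose 2) * q ^ l := by
      rw [← pow_mul, ← pow_add, h3]; ring
    calc _ = (-1) ^ d * z ^ d * gaussBinom q (2 * (d + l)) d
          * (q ^ (d.choose 2) * (q ^ (d + l)) ^ (d + 2 * l)) := by rw [neg_pow z]; ring
      _ = ((-1) ^ (d + l) * (-1) ^ l) * (z ^ (d + l) * w ^ l) * gaussBinom q (2 * (d + l)) d
          * (q ^ ((d + l).choose 2) * q ^ ((d + l) * (d + l)) * q ^ (l.choose 2)) := by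
        rw [h1, h2, h4]; ring
      _ = _ := by ring
  · refine sum_congr rfl fun l hl ↦ ?_
    obtain ⟨d, rfl⟩ : ∃ d, n = d + (l + 1) := ⟨n - (l + 1), by grind⟩
    set n := d + (l + 1) with hn
    rw [show n + 1 + l = n + (l + 1) by ring, show 2 * n - (n + (l + 1)) = d by omega]
    have h4 : q ^ ((n + (l + 1)).choose 2) * (q ^ n) ^ d
      = q ^ (n.choose 2) * q ^ (n * n) * q ^ ((l + 1).choose 2) := by
      rw [← pow_mul, ← pow_add, ← pow_add, ← pow_add, choose_two_add]
      congr 1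
      rw [show n * n = n * d + n * (l + 1) by rw [← mul_add]]
      ring
    rw [neg_pow z]
    linear_combination (-1) ^ (n + (l + 1)) * z ^ (n + (l + 1)) * gaussBinom q (2 * n) (n + (l + 1)) * h4

theorem mul_qPoch_eq_of_mul_pow_eq_zero {q y : R} {r s : ℕ} (h : y * q ^ (r + 1) = 0) (hrs : r ≤ s) :
    y * qPoch q s = y * qPoch q r := by
  induction s, hrs using Nat.le_induction with
  | base => rfl
  | succ s hs ih =>
    have h' : y * q ^ (s + 1) = 0 := by
      rw [show s + 1 = r + 1 + (s - r) by omega, pow_add, ← mul_assoc, h, zero_mul]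
    have e : qPoch q (s + 1) = qPoch q s * (1 - q ^ (s + 1)) := prod_range_succ _ _
    rw [e]
    linear_combination ih - qPoch q s * h'

theorem isUnit_qPoch {q : R} (hq : IsNilpotent q) (n : ℕ) : IsUnit (qPoch q n) := by
  induction n with
  | zero => simp [qPoch]
  | succ n ih =>
    have e : qPoch q (n + 1) = qPoch q n * (1 - q ^ (n + 1)) := prod_range_succ _ _
    rw [e]
    exact ih.mul (hq.pow_succ n).isUnit_one_sub

theorem mul_gaussBinom_mul_qPoch {q y : R} (hq : IsNilpotent q) {r j m s : ℕ}
    (h : y * q ^ (r + 1) = 0) (hj : r ≤ j) (hm : r ≤ m) (hs : r ≤ s) :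
    y * gaussBinom q (j + m) j * qPoch q s = y := by
  have e := gaussBinom_add_mul_qPoch q j m
  have e1 := mul_qPoch_eq_of_mul_pow_eq_zero h hj
  have e2 := mul_qPoch_eq_of_mul_pow_eq_zero h hm
  have e3 := mul_qPoch_eq_of_mul_pow_eq_zero h hs
  have e4 := mul_qPoch_eq_of_mul_pow_eq_zero h (show r ≤ j + m by omega)
  apply (isUnit_qPoch hq r).mul_right_cancel
  linear_combination gaussBinom q (j + m) j * qPoch q r * e3 + y * e + e4
    - gaussBinom q (j + m) j * qPoch q m * e1 - gaussBinom q (j + m) j * qPoch q r * e2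

end QSeries
section GordonSum

variable {R : Type*} [CommRing R]

/-- The truncation to `N` terms of the alternating series `A_{m,i}` that equals `(q)_∞` times the
generating function of Gordon's partitions with parts larger than `m`. -/
def gordonSum (x : R) (N k m i : ℕ) : R :=
  ∑ n ∈ range N, (-1) ^ n * x ^ (m * k * n + k * n ^ 2 + (k - i) * n + (n + 1).choose 2)
    * (1 - x ^ ((m + 2 * n + 1) * i)) * ∏ j ∈ range m, (1 - x ^ (n + 1 + j))

theorem gordonSum_zero_right (x : R) (N k m : ℕ) : gordonSum x N k m 0 = 0 := by
  simp [gordonSum]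

theorem gordonSum_succ {x : R} {N : ℕ} (hx : x ^ N = 0) {k m i : ℕ} (hi : i < k) :
    gordonSum x N k m (i + 1)
      = gordonSum x N k m i + x ^ ((m + 1) * i) * gordonSum x N k (m + 1) (k - i) := by
  obtain ⟨c, rfl⟩ := Nat.exists_eq_add_of_lt hi
  set U : ℕ → R := fun n ↦ (-1) ^ (n + 1)
    * x ^ (m * (i + c + 1) * n + (i + c + 1) * n ^ 2 + c * n + (n + 1).choose 2)
    * (∏ j ∈ range m, (1 - x ^ (n + 1 + j))) * (1 - x ^ n) with hU
  have hUN : U N = 0 := by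
    have : x ^ ((N + 1).choose 2) = 0 := by
      rw [choose_two_succ, pow_add, hx, mul_zero]
    simp only [hU, pow_add, this]
    ring
  have hU0 : U 0 = 0 := by simp [hU]
  have htel := sum_range_sub U N
  rw [hUN, hU0, sub_zero] at htel
  rw [← sub_eq_zero, ← htel]
  unfold gordonSum
  rw [mul_sum, ← sum_add_distrib, ← sum_sub_distrib]
  refine sum_congr rfl fun n _ ↦ ?_
  have h1 : ∏ j ∈ range (m + 1), (1 - x ^ (n + 1 + j))
      = (∏ j ∈ range m, (1 - x ^ (n + 1 + j))) * (1 - x ^ (n + 1 + m)) := prod_range_succ _ _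
  have h2 : (∏ j ∈ range m, (1 - x ^ (n + 1 + 1 + j))) * (1 - x ^ (n + 1))
      = (∏ j ∈ range m, (1 - x ^ (n + 1 + j))) * (1 - x ^ (n + 1 + m)) := by
    rw [← h1, prod_range_succ']
    simp only [add_comm, add_left_comm]
  simp only [hU]
  rw [mul_assoc _ (∏ j ∈ range m, (1 - x ^ (n + 1 + 1 + j))) (1 - x ^ (n + 1)), h1, h2,
    show i + c + 1 - (i + 1) = c by omega, show i + c + 1 - i = c + 1 by omega,
    show i + c + 1 - (c + 1) = i by omega, choose_two_succ (n + 1)]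
  ring

theorem gordonSum_eq_qPoch {x : R} {N : ℕ} (hx : x ^ N = 0) (hN : 0 < N) {k i : ℕ} (hk : 0 < k)
    (hi : 0 < i) : gordonSum x N k N i = qPoch x N := by
  unfold gordonSum
  rw [sum_eq_single_of_mem 0 (by simpa using hN)]
  · have : x ^ ((N + 2 * 0 + 1) * i) = 0 := by
      obtain ⟨i, rfl⟩ := Nat.exists_eq_add_one_of_ne_zero hi.ne'
      rw [show (N + 2 * 0 + 1) * (i + 1) = N + (N * i + i + 1) by ring, pow_add, hx, zero_mul]
    rw [this]
    simp [qPoch, add_comm]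
  · intro n _ hn
    have : x ^ (N * k * n) = 0 := by
      obtain ⟨n, rfl⟩ := Nat.exists_eq_add_one_of_ne_zero hn
      obtain ⟨k, rfl⟩ := Nat.exists_eq_add_one_of_ne_zero hk.ne'
      rw [mul_assoc, pow_mul, hx, zero_pow (by positivity)]
    simp only [pow_add, this]
    ring

theorem map_gaussBinom {S : Type*} [CommRing S] (φ : S →+* R) (q : S) (n j : ℕ) :
    φ (gaussBinom q n j) = gaussBinom (φ q) n j := by
  induction n generalizing j with
  | zero => cases j <;> simp [gaussBinom]
  | succ n ih => cases j <;> simp [gaussBinom, ih]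

/-- Jacobi's triple product identity, truncated. -/
theorem gordonSum_eq_prod {S : Type*} [CommRing S] [IsDomain S] {y : S} (hy : y ≠ 0) (φ : S →+* R)
    {N : ℕ} (hx : φ y ^ N = 0) {k a : ℕ} (ha : 1 ≤ a) (hak : a ≤ k) :
    gordonSum (φ y) N k 0 a = qPoch (φ y ^ (2 * k + 1)) N
      * ∏ j ∈ range N, ((1 - φ y ^ (a + (2 * k + 1) * j))
        * (1 - φ y ^ (2 * k + 1 - a + (2 * k + 1) * j))) := by
  obtain ⟨c, rfl⟩ := Nat.exists_eq_add_of_le hak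
  set x := φ y
  have hjtp := congrArg φ (prod_one_sub_mul_one_sub_eq_sum_gaussBinom (z := y ^ a)
    (w := y ^ (a + 2 * c + 1)) (pow_ne_zero _ hy) (pow_ne_zero _ hy) N)
  rw [← pow_add, show a + (a + 2 * c + 1) = 2 * (a + c) + 1 by ring] at hjtp
  simp only [map_prod, map_mul, map_sub, map_one, map_pow, map_add, map_sum, map_neg,
    map_gaussBinom] at hjtp
  rw [show 2 * (a + c) + 1 - a = a + 2 * c + 1 by omega]
  simp only [pow_add x _ (_ * _), pow_mul x (2 * (a + c) + 1) _]
  change ∏ j ∈ range N, ((1 - x ^ a * (x ^ (2 * (a + c) + 1)) ^ j)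
    * (1 - x ^ (a + 2 * c + 1) * (x ^ (2 * (a + c) + 1)) ^ j)) = _ at hjtp
  rw [hjtp]
  set q := x ^ (2 * (a + c) + 1) with hq
  have hqn : IsNilpotent q := IsNilpotent.pow_of_pos ⟨N, hx⟩ (by omega)
  have hx' : ∀ n, N ≤ n → x ^ n = 0 := fun n hn ↦ pow_eq_zero_of_le hn hx
  have key : ∀ l b, l ≤ N → 1 ≤ b → (x ^ b) ^ l * q ^ (N - l + 1) = 0 := by
    intro l b hl hb
    rw [hq, ← pow_mul, ← pow_mul, ← pow_add]
    apply hx'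
    have : 1 * l ≤ b * l := Nat.mul_le_mul_right l hb
    have : 1 * (N - l + 1) ≤ (2 * (a + c) + 1) * (N - l + 1) :=
      Nat.mul_le_mul_right _ (by omega)
    omega
  have hw : ∀ l ∈ range (N + 1), qPoch q N * ((-1) ^ l * (x ^ (a + 2 * c + 1)) ^ l
      * q ^ (l.choose 2) * gaussBinom q (2 * N) (N - l))
      = (-1) ^ l * (x ^ (a + 2 * c + 1)) ^ l * q ^ (l.choose 2) := by
    intro l hl
    have hl : l ≤ N := by grind
    have := mul_gaussBinom_mul_qPoch hqn (key l (a + 2 * c + 1) hl (by omega))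
      le_rfl (show N - l ≤ N + l by omega) (Nat.sub_le N l)
    rw [show N - l + (N + l) = 2 * N by omega] at this
    linear_combination (-1) ^ l * q ^ (l.choose 2) * this
  have hz : ∀ l ∈ range N, qPoch q N * ((-1) ^ (l + 1) * (x ^ a) ^ (l + 1)
      * q ^ ((l + 1).choose 2) * gaussBinom q (2 * N) (N + (l + 1)))
      = (-1) ^ (l + 1) * (x ^ a) ^ (l + 1) * q ^ ((l + 1).choose 2) := by
    intro l hl
    have hl : l + 1 ≤ N := by grind
    have := mul_gaussBinom_mul_qPoch hqn (key (l + 1) a hl ha)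
      (show N - (l + 1) ≤ N + (l + 1) by omega) le_rfl (Nat.sub_le N (l + 1))
    rw [show N + (l + 1) + (N - (l + 1)) = 2 * N by omega] at this
    linear_combination (-1) ^ (l + 1) * q ^ ((l + 1).choose 2) * this
  have hlast : (x ^ (a + 2 * c + 1)) ^ N = 0 := by
    rw [← pow_mul]
    exact hx' _ (Nat.le_mul_of_pos_left N (by omega))
  rw [mul_add, mul_sum, mul_sum, sum_congr rfl hw, sum_congr rfl hz, sum_range_succ, hlast,
    mul_zero, zero_mul, add_zero, ← sum_add_distrib]
  unfold gordonSum
  refine sum_congr rfl fun n _ ↦ ?_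
  have e1 : (a + c) * n ^ 2 = 2 * (a + c) * n.choose 2 + (a + c) * n := by
    have := two_mul_choose_two_succ n
    rw [choose_two_succ] at this
    rw [show n ^ 2 = 2 * n.choose 2 + n by linarith]
    ring
  rw [range_zero, prod_empty, Nat.add_sub_cancel_left, e1, choose_two_succ, hq]
  ring

/-- The recursion for Gordon's partitions determines its solution. -/
theorem gordonSum_eq_qPoch_mul {x : R} {N : ℕ} (hx : x ^ N = 0) (hN : 0 < N) {k : ℕ}
    (B : ℕ → ℕ → R) (h0 : ∀ m, B m 0 = 0)
    (hB : ∀ m i, i < k → B m (i + 1) = B m i + x ^ ((m + 1) * i) * B (m + 1) (k - i))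
    (h1 : ∀ i, 0 < i → B N i = 1) {m i : ℕ} (hm : m ≤ N) (hi : i ≤ k) :
    gordonSum x N k m i = qPoch x N * B m i := by
  induction hm using Nat.decreasingInduction generalizing i with
  | self =>
    rcases Nat.eq_zero_or_pos i with rfl | hi0
    · rw [gordonSum_zero_right, h0, mul_zero]
    · rw [gordonSum_eq_qPoch hx hN (by omega) hi0, h1 i hi0, mul_one]
  | of_succ m hm ih =>
    induction i with
    | zero => rw [gordonSum_zero_right, h0, mul_zero]
    | succ i ihi =>
      rw [gordonSum_succ hx (by omega), hB m i (by omega), ihi (by omega), ih (by omega)]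
      ring

end GordonSum
section Counting

theorem finite_setOf_multiset_sum_eq (n : ℕ) :
    {s : Multiset ℕ | s.sum = n ∧ ∀ b ∈ s, 0 < b}.Finite := by
  refine (Set.finite_range (fun p : n.Partition ↦ p.parts)).subset ?_
  rintro s ⟨h, hs⟩
  exact ⟨⟨s, fun {i} hi ↦ hs i hi, h⟩, rfl⟩

theorem ncard_setOf_partition_eq (n : ℕ) (P : Multiset ℕ → Prop) :
    Set.ncard {p : n.Partition | P p.parts}
      = Set.ncard {s : Multiset ℕ | s.sum = n ∧ (∀ b ∈ s, 0 < b) ∧ P s} := by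
  rw [← Set.ncard_image_of_injective {p : n.Partition | P p.parts}
    (f := fun p ↦ p.parts) (fun _ _ h ↦ Nat.Partition.ext h)]
  congr 1
  ext s
  constructor
  · rintro ⟨p, hp, rfl⟩
    exact ⟨p.parts_sum, fun b hb ↦ p.parts_pos hb, hp⟩
  · rintro ⟨h, hs, hP⟩
    exact ⟨⟨s, fun {i} hi ↦ hs i hi, h⟩, hP, rfl⟩

/-- The partitions of `n`, as multisets, with all parts larger than `m` and satisfying `P`. -/
def partsAbove (P : Multiset ℕ → Prop) (m n : ℕ) : Set (Multiset ℕ) :=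
  {s | s.sum = n ∧ (∀ b ∈ s, m < b) ∧ P s}

theorem finite_partsAbove (P : Multiset ℕ → Prop) (m n : ℕ) : (partsAbove P m n).Finite :=
  (finite_setOf_multiset_sum_eq n).subset fun _ hs ↦
    ⟨hs.1, fun b hb ↦ (Nat.zero_le m).trans_lt (hs.2.1 b hb)⟩

/-- The generating function of the partitions with all parts larger than `m` satisfying `P`. -/
noncomputable def partsAboveSeries (P : Multiset ℕ → Prop) (m : ℕ) : ℤ⟦X⟧ :=
  PowerSeries.mk fun n ↦ ((partsAbove P m n).ncard : ℤ)

theorem X_pow_dvd_partsAboveSeries_sub_one {P : Multiset ℕ → Prop} (hP : P 0) (m : ℕ) :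
    X ^ (m + 1) ∣ partsAboveSeries P m - 1 := by
  rw [X_pow_dvd_iff]
  intro n hn
  rw [map_sub, partsAboveSeries, coeff_mk, coeff_one]
  have h : partsAbove P m n = if n = 0 then {0} else ∅ := by
    ext s
    have hs : s.sum = n → (∀ b ∈ s, m < b) → s = 0 := by
      intro h1 h2
      by_contra h0
      obtain ⟨b, hb⟩ := Multiset.exists_mem_of_ne_zero h0
      have := Multiset.le_sum_of_mem hb
      have := h2 b hb
      omega
    constructor
    · rintro ⟨h1, h2, -⟩
      obtain rfl := hs h1 h2
      simp [← h1]
    · split_ifs with h0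
      · rintro rfl
        exact ⟨by simp [h0], by simp, hP⟩
      · rintro ⟨⟩
  rw [h]
  split_ifs <;> simp

/-- Splitting off the smallest admissible part `d`, with multiplicity `r`. -/
theorem partsAboveSeries_eq_add {P P₁ P₂ : Multiset ℕ → Prop} {m m₁ m₂ d r : ℕ}
    (h₁ : ∀ s : Multiset ℕ, ((∀ b ∈ s, m < b) ∧ P s) ∧ s.count d < r ↔ (∀ b ∈ s, m₁ < b) ∧ P₁ s)
    (h₂ : ∀ s : Multiset ℕ, ((∀ b ∈ s + Multiset.replicate r d, m < b)
      ∧ P (s + Multiset.replicate r d)) ↔ (∀ b ∈ s, m₂ < b) ∧ P₂ s) :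
    partsAboveSeries P m = partsAboveSeries P₁ m₁ + X ^ (d * r) * partsAboveSeries P₂ m₂ := by
  ext n
  rw [map_add, coeff_X_pow_mul']
  simp only [partsAboveSeries, coeff_mk]
  have hsplit : partsAbove P m n
      = partsAbove P₁ m₁ n ∪ {s | s ∈ partsAbove P m n ∧ r ≤ s.count d} := by
    ext s
    have := h₁ s
    simp only [partsAbove, Set.mem_union, Set.mem_ofPred_eq, ← this]
    grind
  have hdisj : Disjoint (partsAbove P₁ m₁ n) {s | s ∈ partsAbove P m n ∧ r ≤ s.count d} := by
    rw [Set.disjoint_left]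
    rintro s ⟨-, hs⟩ ⟨-, hs'⟩
    have := ((h₁ s).mpr hs).2
    omega
  have hfin := (finite_partsAbove P m n).subset
    (fun s hs ↦ hs.1 : {s | s ∈ partsAbove P m n ∧ r ≤ s.count d} ⊆ _)
  rw [hsplit, Set.ncard_union_eq hdisj (finite_partsAbove P₁ m₁ n) hfin, Nat.cast_add]
  congr 1
  have hr : ∀ s : Multiset ℕ, r ≤ s.count d → ∃ t, s = t + Multiset.replicate r d := fun s hs ↦
    ⟨_, (tsub_add_cancel_of_le (Multiset.le_count_iff_replicate_le.mp hs)).symm⟩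
  split_ifs with hn
  · rw [← Set.ncard_image_of_injective (partsAbove P₂ m₂ (n - d * r))
      (add_left_injective (Multiset.replicate r d))]
    congr 2
    ext s
    constructor
    · rintro ⟨⟨h, hs⟩, hc⟩
      obtain ⟨t, rfl⟩ := hr s hc
      refine ⟨t, ⟨?_, (h₂ t).mp hs⟩, rfl⟩
      rw [Multiset.sum_add, Multiset.sum_replicate, smul_eq_mul, mul_comm] at h
      omega
    · rintro ⟨t, ⟨h, ht⟩, rfl⟩
      refine ⟨⟨?_, (h₂ t).mpr ht⟩, by simp⟩
      rw [Multiset.sum_add, Multiset.sum_replicate, smul_eq_mul, mul_comm]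
      omega
  · rw [Nat.cast_eq_zero, Set.ncard_eq_zero hfin, Set.eq_empty_iff_forall_notMem]
    rintro s ⟨⟨h, -⟩, hc⟩
    obtain ⟨t, rfl⟩ := hr s hc
    rw [Multiset.sum_add, Multiset.sum_replicate, smul_eq_mul, mul_comm] at h
    omega

/-- Multiplying the generating function of the partitions into parts satisfying `p` by the Euler
factors of the admissible parts up to `M` leaves the partitions with all parts larger than `M`. -/
theorem partsAboveSeries_forall_mul_prod (p : ℕ → Prop) [DecidablePred p] (M : ℕ) :
    partsAboveSeries (fun s ↦ ∀ b ∈ s, p b) 0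
        * ∏ j ∈ range M, (if p (j + 1) then 1 - X ^ (j + 1) else 1)
      = partsAboveSeries (fun s ↦ ∀ b ∈ s, p b) M := by
  induction M with
  | zero => simp
  | succ m ih =>
    rw [prod_range_succ, ← mul_assoc, ih]
    split_ifs with hp
    · have h := partsAboveSeries_eq_add (P := fun s ↦ ∀ b ∈ s, p b) (P₁ := fun s ↦ ∀ b ∈ s, p b)
        (P₂ := fun s ↦ ∀ b ∈ s, p b) (m := m) (m₁ := m + 1) (m₂ := m) (d := m + 1) (r := 1)
        (fun s ↦ by
          rw [Nat.lt_one_iff, Multiset.count_eq_zero]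
          refine ⟨fun h ↦ ⟨fun b hb ↦ ?_, h.1.2⟩, fun h ↦ ⟨⟨fun b hb ↦ ?_, h.2⟩, fun hm ↦ ?_⟩⟩
          · have := h.1.1 b hb
            have : b ≠ m + 1 := fun e ↦ h.2 (e ▸ hb)
            omega
          · have := h.1 b hb
            omega
          · exact lt_irrefl _ (h.1 _ hm))
        (fun s ↦ by
          simp only [Multiset.replicate_one, Multiset.mem_add, Multiset.mem_singleton]
          grind)
      rw [mul_one] at h
      linear_combination h
    · rw [mul_one]
      simp only [partsAboveSeries]
      congr 2
      ext n
      congr 2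
      ext s
      refine and_congr_right fun _ ↦ ⟨fun h ↦ ⟨fun b hb ↦ ?_, h.2⟩, fun h ↦ ⟨fun b hb ↦ ?_, h.2⟩⟩
      · have := h.1 b hb
        have : b ≠ m + 1 := fun e ↦ hp (e ▸ h.2 b hb)
        omega
      · have := h.1 b hb
        omega

/-- Gordon's condition for partitions with all parts larger than `m`: the part `m + 1` appears
fewer than `i` times and consecutive parts appear fewer than `k` times. -/
def GordonCond (k m i : ℕ) (s : Multiset ℕ) : Prop :=
  s.count (m + 1) < i ∧ ∀ j, m < j → s.count j + s.count (j + 1) < k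

theorem partsAboveSeries_gordonCond_succ {k m i : ℕ} (hi : i < k) :
    partsAboveSeries (GordonCond k m (i + 1)) m
      = partsAboveSeries (GordonCond k m i) m
        + X ^ ((m + 1) * i) * partsAboveSeries (GordonCond k (m + 1) (k - i)) (m + 1) := by
  refine partsAboveSeries_eq_add (fun s ↦ ?_) (fun s ↦ ?_)
  · unfold GordonCond
    constructor
    · rintro ⟨⟨h, h1, h2⟩, h3⟩
      exact ⟨h, h3, h2⟩
    · rintro ⟨h, h3, h2⟩
      exact ⟨⟨h, by omega, h2⟩, h3⟩
  · have hself : (s + Multiset.replicate i (m + 1)).count (m + 1) = s.count (m + 1) + i := by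
      rw [Multiset.count_add, Multiset.count_replicate_self]
    have hne : ∀ j, m + 1 < j → (s + Multiset.replicate i (m + 1)).count j = s.count j := by
      intro j hj
      rw [Multiset.count_add, Multiset.count_replicate, if_neg (by omega), add_zero]
    constructor
    · rintro ⟨h, h1, h2⟩
      rw [hself] at h1
      have h0 : m + 1 ∉ s := Multiset.count_eq_zero.mp (by omega)
      refine ⟨fun b hb ↦ ?_, ?_, fun j hj ↦ ?_⟩
      · have := h b (Multiset.mem_add.mpr (Or.inl hb))
        have : b ≠ m + 1 := fun e ↦ h0 (e ▸ hb)
        omega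
      · have := h2 (m + 1) (by omega)
        rw [hself, hne _ (by omega)] at this
        omega
      · have := h2 j (by omega)
        rwa [hne _ hj, hne _ (by omega)] at this
    · rintro ⟨h, h1, h2⟩
      have h0 : s.count (m + 1) = 0 :=
        Multiset.count_eq_zero.mpr fun hm ↦ lt_irrefl _ (h _ hm)
      refine ⟨fun b hb ↦ ?_, by omega, fun j hj ↦ ?_⟩
      · rcases Multiset.mem_add.mp hb with hb | hb
        · have := h b hb
          omega
        · rw [Multiset.eq_of_mem_replicate hb]
          omega
      · rcases (Nat.succ_le_of_lt hj).eq_or_lt with rfl | hj'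
        · rw [Nat.succ_eq_add_one, hself, hne _ (by omega)]
          omega
        · rw [hne _ hj', hne _ (by omega)]
          exact h2 j hj'

theorem partsAboveSeries_gordonCond_zero (k m : ℕ) :
    partsAboveSeries (GordonCond k m 0) m = 0 := by
  ext n
  simp [partsAboveSeries, partsAbove, GordonCond]

end Counting

section ResidueClasses

theorem prod_range_mul_add {M : Type*} [CommMonoid M] (f : ℕ → M) (K N : ℕ) :
    ∏ j ∈ range (K * N), f j = ∏ j ∈ range N, ∏ r ∈ range K, f (K * j + r) := by
  induction N with
  | zero => simp
  | succ N ih => rw [Nat.mul_succ, prod_range_add, ih, prod_range_succ]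

theorem prod_range_eq_mul_prod_ite {M : Type*} [CommMonoid M] (f : ℕ → M) {k a : ℕ} (ha : 1 ≤ a)
    (hak : a ≤ k) {p : ℕ → Prop} [DecidablePred p]
    (hp : ∀ b, p b ↔ b % (2 * k + 1) ≠ 0 ∧ b % (2 * k + 1) ≠ a ∧ b % (2 * k + 1) ≠ 2 * k + 1 - a)
    (N : ℕ) :
    ∏ j ∈ range ((2 * k + 1) * N), f (j + 1)
      = (∏ j ∈ range N, (f ((2 * k + 1) * (j + 1)) * (f (a + (2 * k + 1) * j)
            * f (2 * k + 1 - a + (2 * k + 1) * j))))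
        * ∏ j ∈ range ((2 * k + 1) * N),
            if p (j + 1) then f (j + 1) else 1 := by
  rw [prod_range_mul_add, prod_range_mul_add, ← prod_mul_distrib]
  refine prod_congr rfl fun j _ ↦ ?_
  set K := 2 * k + 1 with hK
  rw [← prod_filter, ← prod_filter_mul_prod_filter_not (range K) (fun r ↦ p (K * j + r + 1)), mul_comm]
  congr 1
  have h : (range K).filter (fun r ↦ ¬ p (K * j + r + 1)) = {K - 1, a - 1, K - a - 1} := by
    ext r
    simp only [mem_filter, mem_range, mem_insert, mem_singleton, hp]
    have h1 : (K * j + r + 1) % K = (r + 1) % K := by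
      rw [add_assoc, Nat.mul_add_mod]
    rw [h1]
    constructor
    · rintro ⟨hr, h⟩
      rcases (Nat.succ_le_of_lt hr).eq_or_lt with e | e
      · omega
      · rw [Nat.mod_eq_of_lt e] at h
        omega
    · rintro (rfl | rfl | rfl)
      · refine ⟨by omega, ?_⟩
        rw [Nat.sub_add_cancel (by omega), Nat.mod_self]
        simp
      · refine ⟨by omega, ?_⟩
        rw [Nat.sub_add_cancel (by omega), Nat.mod_eq_of_lt (by omega)]
        simp
      · refine ⟨by omega, ?_⟩
        rw [Nat.sub_add_cancel (by omega), Nat.mod_eq_of_lt (by omega)]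
        simp
  rw [h, prod_insert (by simp; omega), prod_insert (by simp; omega), prod_singleton]
  rw [Nat.mul_succ, add_assoc (K * j), add_assoc (K * j), add_assoc (K * j),
    Nat.sub_add_cancel (by omega), Nat.sub_add_cancel (by omega), Nat.sub_add_cancel (by omega),
    add_comm a, add_comm (K - a)]

end ResidueClasses

/-- Rogers–Ramanujan–Gordon: for `2 ≤ k`, `1 ≤ a ≤ k`, the number of partitions
of `n` into parts not congruent to `0, ±a (mod 2k+1)` equals the number of
partitions of `n` in which `1` appears fewer than `a` times and, for every `i ≥ 1`,
the multiplicities of `i` and `i+1` sum to less than `k`. -/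
theorem rogers_ramanujan_gordon (k a n : ℕ) (hk : 2 ≤ k) (ha : 1 ≤ a) (hak : a ≤ k) :
    Set.ncard {p : n.Partition | ∀ b ∈ p.parts,
        b % (2 * k + 1) ≠ 0 ∧ b % (2 * k + 1) ≠ a ∧ b % (2 * k + 1) ≠ 2 * k + 1 - a}
      = Set.ncard {p : n.Partition | p.parts.count 1 < a ∧
          ∀ i : ℕ, 1 ≤ i → p.parts.count i + p.parts.count (i + 1) < k} := by
  set N := n + 1 with hN
  set p : ℕ → Prop := fun b ↦
    b % (2 * k + 1) ≠ 0 ∧ b % (2 * k + 1) ≠ a ∧ b % (2 * k + 1) ≠ 2 * k + 1 - a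
  have : DecidablePred p := fun b ↦ inferInstanceAs (Decidable (_ ∧ _ ∧ _))
  set φ := Ideal.Quotient.mk (Ideal.span {(X : ℤ⟦X⟧) ^ N}) with hφ
  have hφ0 : ∀ f, φ f = 0 ↔ X ^ N ∣ f := fun f ↦ by
    rw [hφ, Ideal.Quotient.eq_zero_iff_mem, Ideal.mem_span_singleton]
  have hx : φ X ^ N = 0 := by
    rw [← map_pow, hφ0]
  have hone : ∀ (P : Multiset ℕ → Prop) (m : ℕ), P 0 → N ≤ m + 1 →
      φ (partsAboveSeries P m) = 1 := by
    intro P m hP hm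
    rw [← sub_eq_zero, ← map_one φ, ← map_sub, hφ0]
    exact (pow_dvd_pow X hm).trans (X_pow_dvd_partsAboveSeries_sub_one hP m)
  set G := partsAboveSeries (fun s ↦ ∀ b ∈ s, p b) 0 with hG
  set B := partsAboveSeries (GordonCond k 0 a) 0 with hB
  have hGordon : gordonSum (φ X) N k 0 a = qPoch (φ X) N * φ B := by
    refine gordonSum_eq_qPoch_mul hx (by omega)
      (fun m i ↦ φ (partsAboveSeries (GordonCond k m i) m)) (fun m ↦ ?_) (fun m i hi ↦ ?_)
      (fun i hi ↦ ?_) (Nat.zero_le N) hak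
    · simp only [partsAboveSeries_gordonCond_zero, map_zero]
    · simp only [partsAboveSeries_gordonCond_succ hi, map_add, map_mul, map_pow]
    · exact hone _ _ ⟨by simpa using hi, by simp; omega⟩ (by omega)
  have hProd : gordonSum (φ X) N k 0 a = qPoch (φ X) N * φ G := by
    have hN' : N ≤ (2 * k + 1) * N := Nat.le_mul_of_pos_left N (by omega)
    have h1 := congrArg φ (partsAboveSeries_forall_mul_prod p ((2 * k + 1) * N))
    rw [map_mul, hone _ ((2 * k + 1) * N) (by simp) (by omega), map_prod, ← hG] at h1
    have h2 := prod_range_eq_mul_prod_ite (fun j ↦ 1 - φ X ^ j) ha hak (p := p) (fun _ ↦ Iff.rfl) N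
    have h3 : qPoch (φ X) ((2 * k + 1) * N) = qPoch (φ X) N := by
      have := mul_qPoch_eq_of_mul_pow_eq_zero (q := φ X) (y := 1) (r := N)
        (s := (2 * k + 1) * N) (by rw [pow_succ (φ X), hx, zero_mul, mul_zero]) hN'
      simpa using this
    rw [gordonSum_eq_prod X_ne_zero φ hx ha hak, ← h3]
    unfold qPoch
    rw [h2, ← prod_mul_distrib, mul_assoc, mul_comm _ (φ G)]
    simp only [apply_ite φ, map_sub, map_one, map_pow] at h1
    rw [h1, mul_one]
    simp only [pow_mul]
  have hGB : φ G = φ B := (isUnit_qPoch ⟨N, hx⟩ N).mul_left_cancel (hProd.symm.trans hGordon)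
  rw [← sub_eq_zero, ← map_sub, hφ0, X_pow_dvd_iff] at hGB
  have hn := hGB n (by omega)
  rw [map_sub, sub_eq_zero, hG, hB, partsAboveSeries, partsAboveSeries, coeff_mk, coeff_mk,
    Nat.cast_inj] at hn
  exact (ncard_setOf_partition_eq n (fun s ↦ ∀ b ∈ s, p b)).trans <| hn.trans
    (ncard_setOf_partition_eq n (GordonCond k 0 a)).symm
end

section
/- Let k ≥ 2 and 1 ≤ a ≤ k. For every n ≥ 0, the number of overpartitions of n with f_1 < a and f_i + f_{ī} + f_{i+1} < k for all i equals: (if a < k) the number of overpartitions of n whose non-overlined parts are not congruent to 0 or ±a mod 2k; (if a = k) the number of overpartitions of n with no part divisible by k. -/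
/-- An overpartition recorded by a pair of multiplicity functions:
`p.1 i` is the number of non-overlined occurrences of the part `i` and
`p.2 i ∈ {0, 1}` is the number of overlined occurrences of `i`.
There are no parts equal to `0`. -/
def IsOverPtn (p : (ℕ →₀ ℕ) × (ℕ →₀ ℕ)) : Prop :=
  p.1 0 = 0 ∧ p.2 0 = 0 ∧ ∀ i, p.2 i ≤ 1

/-- The number of parts of an overpartition. -/
def opParts (p : (ℕ →₀ ℕ) × (ℕ →₀ ℕ)) : ℕ :=
  (p.1.sum fun _ v => v) + (p.2.sum fun _ v => v)

/-- The weight (number partitioned) of an overpartition. -/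
def opWt (p : (ℕ →₀ ℕ) × (ℕ →₀ ℕ)) : ℕ :=
  (p.1.sum fun i v => i * v) + (p.2.sum fun i v => i * v)

/-- Conditions (i)-(iv) of Definition 1.6 (Kursungoz–Zadehdabbagh), with modulus `d`,
first index `N = dk + e` and second index `M = da + f`: writing `f_i = p.1 i`,
`f_{ī} = p.2 i`,
(i) `f_1 ≤ M - 1 + (d-1) f_{1̄}`;
(ii) `f_{2l-1} ≥ (d-1) f_{\overline{2l-1}}`;
(iii) `f_{2l} + f_{\overline{2l}} ≡ 0 (mod d)`;
(iv) `f_l + f_{l̄} + f_{l+1} ≤ N - 1 + (d-1) f_{\overline{l+1}}` for all `l ≥ 1`. -/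
def uCond (d N M : ℕ) (p : (ℕ →₀ ℕ) × (ℕ →₀ ℕ)) : Prop :=
  p.1 1 + 1 ≤ M + (d - 1) * p.2 1 ∧
  (∀ l : ℕ, (d - 1) * p.2 (2 * l + 1) ≤ p.1 (2 * l + 1)) ∧
  (∀ l : ℕ, d ∣ p.1 (2 * l + 2) + p.2 (2 * l + 2)) ∧
  (∀ l : ℕ, 1 ≤ l → p.1 l + p.2 l + p.1 (l + 1) + 1 ≤ N + (d - 1) * p.2 (l + 1))

/-- Conditions (ī)-(iv̄): as `uCond` with the parity roles of odd and even parts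
swapped in the second and third conditions. -/
def ubarCond (d N M : ℕ) (p : (ℕ →₀ ℕ) × (ℕ →₀ ℕ)) : Prop :=
  p.1 1 + 1 ≤ M + (d - 1) * p.2 1 ∧
  (∀ l : ℕ, (d - 1) * p.2 (2 * l + 2) ≤ p.1 (2 * l + 2)) ∧
  (∀ l : ℕ, d ∣ p.1 (2 * l + 1) + p.2 (2 * l + 1)) ∧
  (∀ l : ℕ, 1 ≤ l → p.1 l + p.2 l + p.1 (l + 1) + 1 ≤ N + (d - 1) * p.2 (l + 1))

/-- `u_{N, M}(m, n)`: the number of overpartitions of `n` into `m` parts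
satisfying conditions (i)-(iv). -/
noncomputable def uCount (d N M m n : ℕ) : ℕ :=
  Set.ncard {p : (ℕ →₀ ℕ) × (ℕ →₀ ℕ) |
    IsOverPtn p ∧ opParts p = m ∧ opWt p = n ∧ uCond d N M p}

/-- `ū_{N, M}(m, n)`: the number of overpartitions of `n` into `m` parts
satisfying conditions (ī)-(iv̄). -/
noncomputable def ubarCount (d N M m n : ℕ) : ℕ :=
  Set.ncard {p : (ℕ →₀ ℕ) × (ℕ →₀ ℕ) |
    IsOverPtn p ∧ opParts p = m ∧ opWt p = n ∧ ubarCond d N M p}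

/-- The two-variable generating function `U_{N,M}(x) = Σ u_{N,M}(m,n) x^m q^n`. -/
noncomputable def Ugf (d N M : ℕ) (x q : ℂ) : ℂ :=
  ∑' mn : ℕ × ℕ, (uCount d N M mn.1 mn.2 : ℂ) * x ^ mn.1 * q ^ mn.2

/-- The two-variable generating function `Ū_{N,M}(x) = Σ ū_{N,M}(m,n) x^m q^n`. -/
noncomputable def UbarGf (d N M : ℕ) (x q : ℂ) : ℂ :=
  ∑' mn : ℕ × ℕ, (ubarCount d N M mn.1 mn.2 : ℂ) * x ^ mn.1 * q ^ mn.2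

/-- The infinite q-Pochhammer symbol `(a; q)_∞ = ∏_{j ≥ 0} (1 - a q^j)`. -/
noncomputable def qPochInf (a q : ℂ) : ℂ := ∏' j : ℕ, (1 - a * q ^ j)

/-- The finite q-Pochhammer symbol `(a; q)_n = ∏_{j=0}^{n-1} (1 - a q^j)`. -/
noncomputable def qPochFin (a q : ℂ) (n : ℕ) : ℂ := ∏ j ∈ Finset.range n, (1 - a * q ^ j)

open PowerSeries in
/-- The weight generating function of a set of overpartitions. -/
noncomputable def opGenFun (S : Set ((ℕ →₀ ℕ) × (ℕ →₀ ℕ))) : ℤ⟦X⟧ :=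
  PowerSeries.mk fun n => (Set.ncard {p | p ∈ S ∧ opWt p = n} : ℤ)

/-- Adding `u` non-overlined and `v` overlined copies of the part `j`. -/
noncomputable def opShift (j u v : ℕ) (p : (ℕ →₀ ℕ) × (ℕ →₀ ℕ)) : (ℕ →₀ ℕ) × (ℕ →₀ ℕ) :=
  (p.1 + Finsupp.single j u, p.2 + Finsupp.single j v)

theorem opWt_opShift (j u v : ℕ) (p : (ℕ →₀ ℕ) × (ℕ →₀ ℕ)) :
    opWt (opShift j u v p) = opWt p + j * (u + v) := by
  unfold opWt opShift
  rw [Finsupp.sum_add_index' (by simp) (by intros; ring),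
    Finsupp.sum_add_index' (by simp) (by intros; ring)]
  simp only [Finsupp.sum_single_index, mul_zero]
  ring

theorem opShift_injective (j u v : ℕ) : Function.Injective (opShift j u v) := by
  intro p p' h
  simp only [opShift, Prod.mk.injEq, add_left_inj] at h
  exact Prod.ext h.1 h.2

theorem mem_opShift_image {j u v : ℕ} {S : Set ((ℕ →₀ ℕ) × (ℕ →₀ ℕ))}
    {p : (ℕ →₀ ℕ) × (ℕ →₀ ℕ)} :
    p ∈ opShift j u v '' S ↔ u ≤ p.1 j ∧ v ≤ p.2 j ∧
      (p.1 - Finsupp.single j u, p.2 - Finsupp.single j v) ∈ S := by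
  constructor
  · rintro ⟨p, hp, rfl⟩
    simpa [opShift] using hp
  · rintro ⟨hu, hv, hp⟩
    refine ⟨_, hp, ?_⟩
    simp only [opShift]
    rw [tsub_add_cancel_of_le (by simpa using hu), tsub_add_cancel_of_le (by simpa using hv)]

theorem mul_le_opWt (p : (ℕ →₀ ℕ) × (ℕ →₀ ℕ)) (i : ℕ) : i * (p.1 i + p.2 i) ≤ opWt p := by
  have key (f : ℕ →₀ ℕ) : i * f i ≤ f.sum fun i v => i * v := by
    by_cases h : i ∈ f.support
    · exact Finset.single_le_sum (f := fun i => i * f i) (fun _ _ => Nat.zero_le _) h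
    · simp [Finsupp.notMem_support_iff.mp h]
  unfold opWt
  linarith [key p.1, key p.2]

theorem finite_isOverPtn_opWt (n : ℕ) : {p | IsOverPtn p ∧ opWt p = n}.Finite := by
  let b : ℕ →₀ ℕ := Finsupp.indicator (Finset.range (n + 1)) fun _ _ => n
  refine (Set.finite_Iic (b, b)).subset ?_
  rintro p ⟨⟨h1, h2, -⟩, hn⟩
  have key (i : ℕ) : p.1 i + p.2 i ≤ b i := by
    have h := mul_le_opWt p i
    rw [hn] at h
    rcases Nat.eq_zero_or_pos i with rfl | hi
    · omega
    rcases Nat.eq_zero_or_pos (p.1 i + p.2 i) with h0 | h0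
    · omega
    have : i < n + 1 := by nlinarith
    simp only [b, Finsupp.indicator_apply, Finset.mem_range, this, dif_pos]
    nlinarith
  exact ⟨fun i => (Nat.le_add_right _ _).trans (key i),
    fun i => (Nat.le_add_left _ _).trans (key i)⟩

theorem opGenFun_union {S T : Set ((ℕ →₀ ℕ) × (ℕ →₀ ℕ))} (hS : ∀ p ∈ S, IsOverPtn p)
    (hT : ∀ p ∈ T, IsOverPtn p) (hST : Disjoint S T) :
    opGenFun (S ∪ T) = opGenFun S + opGenFun T := by
  ext n
  simp only [opGenFun, PowerSeries.coeff_mk, map_add]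
  rw [← Nat.cast_add, ← Set.ncard_union_eq
    (Set.disjoint_left.2 fun p h h' => Set.disjoint_left.1 hST h.1 h'.1)
    ((finite_isOverPtn_opWt n).subset fun p h => ⟨hS p h.1, h.2⟩)
    ((finite_isOverPtn_opWt n).subset fun p h => ⟨hT p h.1, h.2⟩)]
  congr 2
  ext p
  simp [or_and_right]

theorem opGenFun_opShift_image (j u v : ℕ) (S : Set ((ℕ →₀ ℕ) × (ℕ →₀ ℕ))) :
    opGenFun (opShift j u v '' S) = PowerSeries.X ^ (j * (u + v)) * opGenFun S := by
  ext n
  simp only [opGenFun, PowerSeries.coeff_mk, PowerSeries.coeff_X_pow_mul']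
  split_ifs with h
  · rw [← Set.ncard_image_of_injective {p | p ∈ S ∧ opWt p = n - j * (u + v)}
      (opShift_injective j u v)]
    congr 2
    ext p
    constructor
    · rintro ⟨⟨p, hp, rfl⟩, hn⟩
      rw [opWt_opShift] at hn
      exact ⟨p, ⟨hp, by omega⟩, rfl⟩
    · rintro ⟨p, ⟨hp, hn⟩, rfl⟩
      refine ⟨⟨p, hp, rfl⟩, ?_⟩
      rw [opWt_opShift]
      omega
  · rw [Nat.cast_eq_zero]
    convert Set.ncard_empty ((ℕ →₀ ℕ) × (ℕ →₀ ℕ)) using 2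
    rw [Set.eq_empty_iff_forall_notMem]
    rintro _ ⟨⟨p, hp, rfl⟩, hn⟩
    rw [opWt_opShift] at hn
    omega

theorem X_pow_dvd_opGenFun_sub_one {m : ℕ} {S : Set ((ℕ →₀ ℕ) × (ℕ →₀ ℕ))} (h0 : 0 ∈ S)
    (hS : ∀ p ∈ S, ∀ i ≤ m, p.1 i = 0 ∧ p.2 i = 0) :
    PowerSeries.X ^ (m + 1) ∣ opGenFun S - 1 := by
  rw [PowerSeries.X_pow_dvd_iff]
  intro n hn
  have key (p) (hp : p ∈ S) (hw : opWt p = n) : p = 0 := by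
    have (i : ℕ) : p.1 i = 0 ∧ p.2 i = 0 := by
      by_contra h
      have hi : m < i := by
        by_contra! hi
        exact h (hS p hp i hi)
      have := mul_le_opWt p i
      have : 1 ≤ p.1 i + p.2 i := by omega
      nlinarith
    exact Prod.ext (Finsupp.ext fun i => (this i).1) (Finsupp.ext fun i => (this i).2)
  simp only [opGenFun, map_sub, PowerSeries.coeff_mk, PowerSeries.coeff_one]
  split_ifs with h
  · have : {p | p ∈ S ∧ opWt p = n} = {0} := by
      ext p
      simp only [Set.mem_ofPred_eq, Set.mem_singleton_iff]
      constructor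
      · exact fun hp => key p hp.1 hp.2
      · rintro rfl
        exact ⟨h0, by simp [opWt, h]⟩
    simp [this]
  · have : {p | p ∈ S ∧ opWt p = n} = ∅ := by
      rw [Set.eq_empty_iff_forall_notMem]
      rintro p ⟨hp, hw⟩
      obtain rfl := key p hp hw
      exact h (by simpa [opWt] using hw.symm)
    simp [this]

/-- Overpartitions with all parts greater than `m`, fewer than `a` non-overlined parts `m + 1`, and
`f_i + f_{ī} + f_{i+1} < k` for all `i > m`. -/
def gordonSet (k m a : ℕ) : Set ((ℕ →₀ ℕ) × (ℕ →₀ ℕ)) :=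
  {p | IsOverPtn p ∧ (∀ i ≤ m, p.1 i = 0 ∧ p.2 i = 0) ∧ p.1 (m + 1) < a ∧
    ∀ i, m < i → p.1 i + p.2 i + p.1 (i + 1) < k}

theorem gordonSet_succ (i c m : ℕ) :
    gordonSet (i + c + 1) m (i + 1) = gordonSet (i + c + 1) m i ∪
      (opShift (m + 1) i 0 '' gordonSet (i + c + 1) (m + 1) (c + 1) ∪
        opShift (m + 1) i 1 '' gordonSet (i + c + 1) (m + 1) c) := by
  ext p
  simp only [Set.mem_union, mem_opShift_image]
  simp only [gordonSet, IsOverPtn, Set.mem_ofPred_eq, Finsupp.coe_tsub, Pi.sub_apply,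
    Finsupp.single_apply]
  constructor
  · rintro ⟨⟨h1, h2, h3⟩, h4, h5, h6⟩
    have h7 := h3 (m + 1)
    have h8 := h6 (m + 1)
    by_cases hi : p.1 (m + 1) < i
    · exact .inl ⟨⟨h1, h2, h3⟩, h4, hi, h6⟩
    by_cases hv : p.2 (m + 1) = 0
    · refine .inr (.inl ⟨by omega, by omega, ⟨by grind, by grind, by grind⟩, ?_, ?_, ?_⟩) <;> grind
    · refine .inr (.inr ⟨by omega, by omega, ⟨by grind, by grind, by grind⟩, ?_, ?_, ?_⟩) <;> grind
  · rintro (⟨⟨h1, h2, h3⟩, h4, h5, h6⟩ | ⟨h0, h0', ⟨h1, h2, h3⟩, h4, h5, h6⟩ |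
      ⟨h0, h0', ⟨h1, h2, h3⟩, h4, h5, h6⟩)
    · exact ⟨⟨h1, h2, h3⟩, h4, by omega, h6⟩
    all_goals
      have h7 := h4 (m + 1)
      refine ⟨⟨by grind, by grind, by grind⟩, by grind, by grind, fun j hj => ?_⟩
      obtain rfl | hj := eq_or_ne j (m + 1)
      · grind
      · have := h6 j
        grind

theorem opGenFun_gordonSet_succ (i c m : ℕ) :
    opGenFun (gordonSet (i + c + 1) m (i + 1)) = opGenFun (gordonSet (i + c + 1) m i) +
      PowerSeries.X ^ ((m + 1) * i) * (opGenFun (gordonSet (i + c + 1) (m + 1) (c + 1)) +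
        PowerSeries.X ^ (m + 1) * opGenFun (gordonSet (i + c + 1) (m + 1) c)) := by
  have hS (j a) : ∀ p ∈ gordonSet (i + c + 1) j a, IsOverPtn p := fun p hp => hp.1
  have hU : ∀ p ∈ gordonSet (i + c + 1) m (i + 1), IsOverPtn p := hS _ _
  rw [gordonSet_succ] at hU ⊢
  rw [opGenFun_union (hS _ _) (fun p hp => hU p (.inr hp)),
    opGenFun_union (fun p hp => hU p (.inr (.inl hp))) (fun p hp => hU p (.inr (.inr hp))),
    opGenFun_opShift_image, opGenFun_opShift_image]
  · ring
  · rw [Set.disjoint_left]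
    rintro _ ⟨p, hp, rfl⟩ ⟨p', hp', h⟩
    have h1 := congrArg (fun p => p.2 (m + 1)) h
    have h2 := (hp.2.1 (m + 1) le_rfl).2
    have h3 := (hp'.2.1 (m + 1) le_rfl).2
    simp [opShift, h2, h3] at h1
  · rw [Set.disjoint_left]
    rintro p hp h
    have h1 : p.1 (m + 1) < i := hp.2.2.1
    rcases h with h | h <;> exact absurd (mem_opShift_image.1 h).1 (by omega)

/-- Overpartitions with all parts greater than `m`, non-overlined parts in `A` and overlined parts
in `B`. -/
def restrictedSet (A B : Set ℕ) (m : ℕ) : Set ((ℕ →₀ ℕ) × (ℕ →₀ ℕ)) :=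
  {p | IsOverPtn p ∧ (∀ i ≤ m, p.1 i = 0 ∧ p.2 i = 0) ∧ (∀ i, 0 < p.1 i → i ∈ A) ∧
    ∀ i, 0 < p.2 i → i ∈ B}

theorem restrictedSet_of_notMem_right {A B : Set ℕ} {m : ℕ} (h : m + 1 ∉ B) :
    restrictedSet A B m = restrictedSet A (B \ {m + 1}) m := by
  rw [Set.sdiff_singleton_eq_self h]

theorem restrictedSet_of_mem_right {A B : Set ℕ} {m : ℕ} (h : m + 1 ∈ B) :
    restrictedSet A B m = restrictedSet A (B \ {m + 1}) m ∪
      opShift (m + 1) 0 1 '' restrictedSet A (B \ {m + 1}) m := by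
  ext p
  simp only [Set.mem_union, mem_opShift_image]
  simp only [restrictedSet, IsOverPtn, Set.mem_ofPred_eq, Finsupp.coe_tsub, Pi.sub_apply,
    Finsupp.single_apply, Set.mem_sdiff, Set.mem_singleton_iff]
  constructor
  · rintro ⟨⟨h1, h2, h3⟩, h4, h5, h6⟩
    have h7 := h3 (m + 1)
    by_cases hv : p.2 (m + 1) = 0
    · exact .inl ⟨⟨h1, h2, h3⟩, h4, h5, by grind⟩
    · exact .inr ⟨by omega, by omega, ⟨by grind, by grind, by grind⟩, by grind, by grind, by grind⟩
  · rintro (⟨⟨h1, h2, h3⟩, h4, h5, h6⟩ | ⟨h0, h0', ⟨h1, h2, h3⟩, h4, h5, h6⟩)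
    · exact ⟨⟨h1, h2, h3⟩, h4, h5, fun i hi => (h6 i hi).1⟩
    · have h7 := h6 (m + 1)
      exact ⟨⟨by grind, by grind, by grind⟩, by grind, by grind, by grind⟩

theorem restrictedSet_diff_of_notMem_left {A B : Set ℕ} {m : ℕ} (h : m + 1 ∉ A) :
    restrictedSet A (B \ {m + 1}) m = restrictedSet A B (m + 1) := by
  ext p
  simp only [restrictedSet, IsOverPtn, Set.mem_ofPred_eq, Set.mem_sdiff, Set.mem_singleton_iff]
  constructor
  · rintro ⟨⟨h1, h2, h3⟩, h4, h5, h6⟩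
    have h7 := h5 (m + 1)
    have h8 := h6 (m + 1)
    exact ⟨⟨h1, h2, h3⟩, by grind, h5, by grind⟩
  · rintro ⟨⟨h1, h2, h3⟩, h4, h5, h6⟩
    have h7 := h4 (m + 1)
    exact ⟨⟨h1, h2, h3⟩, by grind, h5, by grind⟩

theorem restrictedSet_diff_of_mem_left {A B : Set ℕ} {m : ℕ} (h : m + 1 ∈ A) :
    restrictedSet A (B \ {m + 1}) m = restrictedSet A B (m + 1) ∪
      opShift (m + 1) 1 0 '' restrictedSet A (B \ {m + 1}) m := by
  ext p
  simp only [Set.mem_union, mem_opShift_image]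
  simp only [restrictedSet, IsOverPtn, Set.mem_ofPred_eq, Finsupp.coe_tsub, Pi.sub_apply,
    Finsupp.single_apply, Set.mem_sdiff, Set.mem_singleton_iff]
  constructor
  · rintro ⟨⟨h1, h2, h3⟩, h4, h5, h6⟩
    have h7 := h6 (m + 1)
    by_cases hv : p.1 (m + 1) = 0
    · exact .inl ⟨⟨h1, h2, h3⟩, by grind, h5, by grind⟩
    · exact .inr ⟨by omega, by omega, ⟨by grind, by grind, by grind⟩, by grind, by grind, by grind⟩
  · rintro (⟨⟨h1, h2, h3⟩, h4, h5, h6⟩ | ⟨h0, h0', ⟨h1, h2, h3⟩, h4, h5, h6⟩)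
    · have h7 := h4 (m + 1)
      exact ⟨⟨h1, h2, h3⟩, by grind, h5, by grind⟩
    · have h7 := h6 (m + 1)
      exact ⟨⟨by grind, by grind, by grind⟩, by grind, by grind, by grind⟩

open scoped Classical in
theorem opGenFun_restrictedSet (A B : Set ℕ) (m : ℕ) :
    opGenFun (restrictedSet A B m) * (if m + 1 ∈ A then 1 - PowerSeries.X ^ (m + 1) else 1) =
      (if m + 1 ∈ B then 1 + PowerSeries.X ^ (m + 1) else 1) *
        opGenFun (restrictedSet A B (m + 1)) := by
  have hS (A B m) : ∀ p ∈ restrictedSet A B m, IsOverPtn p := fun p hp => hp.1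
  have hB : opGenFun (restrictedSet A B m) =
      (if m + 1 ∈ B then 1 + PowerSeries.X ^ (m + 1) else 1) *
        opGenFun (restrictedSet A (B \ {m + 1}) m) := by
    split_ifs with h
    · have hU := hS A B m
      rw [restrictedSet_of_mem_right h] at hU ⊢
      rw [opGenFun_union (hS _ _ _) (fun p hp => hU p (.inr hp)), opGenFun_opShift_image]
      · ring
      · rw [Set.disjoint_left]
        rintro _ hp hp'
        have h1 := (mem_opShift_image.1 hp').2.1
        exact (hp.2.2.2 (m + 1) (by omega)).2 rfl
    · rw [restrictedSet_of_notMem_right h, one_mul]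
  have hA : opGenFun (restrictedSet A (B \ {m + 1}) m) *
      (if m + 1 ∈ A then 1 - PowerSeries.X ^ (m + 1) else 1) =
        opGenFun (restrictedSet A B (m + 1)) := by
    split_ifs with h
    · have hU := hS A (B \ {m + 1}) m
      have hE := congrArg opGenFun (restrictedSet_diff_of_mem_left (B := B) h)
      rw [restrictedSet_diff_of_mem_left h] at hU
      rw [opGenFun_union (hS _ _ _) (fun p hp => hU p (.inr hp)), opGenFun_opShift_image] at hE
      · linear_combination hE
      · rw [Set.disjoint_left]
        rintro _ hp hp'
        have h1 := (mem_opShift_image.1 hp').1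
        have h2 := (hp.2.1 (m + 1) le_rfl).1
        omega
    · rw [restrictedSet_diff_of_notMem_left h, mul_one]
  rw [hB, mul_assoc, hA]

open scoped Classical in
theorem opGenFun_restrictedSet_zero_mul_prod (A B : Set ℕ) (N : ℕ) :
    opGenFun (restrictedSet A B 0) *
        ∏ i ∈ Finset.range N, (if i + 1 ∈ A then 1 - PowerSeries.X ^ (i + 1) else 1) =
      (∏ i ∈ Finset.range N, (if i + 1 ∈ B then 1 + PowerSeries.X ^ (i + 1) else 1)) *
        opGenFun (restrictedSet A B N) := by
  induction N with
  | zero => simp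
  | succ N ih =>
    rw [Finset.prod_range_succ, Finset.prod_range_succ, ← mul_assoc, ih, mul_assoc, mul_assoc,
      opGenFun_restrictedSet]

section GordonSeries

variable {S : Type*} [CommRing S]

/-- The partial sum of length `L` of the series solving the recurrence of `opGenFun_gordonSet_succ`
with `k = i + c`, up to a factor which does not depend on `i`, `c` and `m`. Here `r j` stands for
`(1 - q ^ j) / (1 + q ^ j)`. -/
def gordonSeries (q : S) (r : ℕ → S) (L i c m : ℕ) : S :=
  ∑ n ∈ Finset.range L, (-1) ^ n * q ^ (n * (m * (i + c) + (i + c) * n + c)) *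
    (1 - q ^ ((m + 1 + 2 * n) * i)) * ∏ j ∈ Finset.range m, r (n + 1 + j)

theorem gordonSeries_zero (q : S) (r : ℕ → S) (L c m : ℕ) : gordonSeries q r L 0 c m = 0 := by
  simp [gordonSeries]

theorem pow_eq_zero_of_le_of_pow_eq_zero {q : S} {L e : ℕ} (hq : q ^ L = 0) (h : L ≤ e) :
    q ^ e = 0 := by
  rw [← Nat.sub_add_cancel h, pow_add, hq, mul_zero]

theorem gordonSeries_succ {q : S} {r : ℕ → S} {L : ℕ} (hr : ∀ j, r j * (1 + q ^ j) = 1 - q ^ j)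
    (hq : q ^ L = 0) (i c m : ℕ) :
    gordonSeries q r L (i + 1) c m = gordonSeries q r L i (c + 1) m +
      q ^ ((m + 1) * i) * (gordonSeries q r L (c + 1) i (m + 1) +
        q ^ (m + 1) * gordonSeries q r L c (i + 1) (m + 1)) := by
  let C (m n : ℕ) : S := ∏ j ∈ Finset.range m, r (n + 1 + j)
  let k := i + c + 1
  let A (n : ℕ) : S := (-1) ^ n * q ^ (n * (m * k + k * n + c)) * (1 - q ^ n) * C m n
  let B (n : ℕ) : S := (-1) ^ n * q ^ (n * (m * k + k * n + c + 1) + (m + 1 + 2 * n) * i) *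
    (1 - q ^ (n + m + 1)) * C m n
  have hC1 (n : ℕ) : C m (n + 1) * (1 - q ^ (n + 1)) = C (m + 1) n * (1 + q ^ (n + 1)) := by
    have : C (m + 1) n = C m (n + 1) * r (n + 1) := by
      simp only [C, Finset.prod_range_succ', add_zero]
      congr 1
      exact Finset.prod_congr rfl fun j _ => by congr 1; ring
    rw [this, ← hr]
    ring
  have hC2 (n : ℕ) : C m n * (1 - q ^ (n + m + 1)) = C (m + 1) n * (1 + q ^ (n + m + 1)) := by
    simp only [C, Finset.prod_range_succ]
    rw [← hr, show n + 1 + m = n + m + 1 by ring]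
    ring
  have hA0 : A 0 = 0 := by simp [A]
  have hAL : A L = 0 := by
    have : q ^ (L * (m * k + k * L + c)) = 0 := by
      rcases Nat.eq_zero_or_pos L with rfl | hL
      · simpa using hq
      · refine pow_eq_zero_of_le_of_pow_eq_zero hq (Nat.le_mul_of_pos_right L ?_)
        positivity
    simp [A, this]
  have hsum : ∑ n ∈ Finset.range L, A n = ∑ n ∈ Finset.range L, A (n + 1) := by
    have h := Finset.sum_range_succ A L
    rw [Finset.sum_range_succ', hA0, hAL] at h
    simpa using h.symm
  have hleft : gordonSeries q r L (i + 1) c m - gordonSeries q r L i (c + 1) m =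
      ∑ n ∈ Finset.range L, (A n + B n) := by
    simp only [gordonSeries]
    rw [← Finset.sum_sub_distrib]
    refine Finset.sum_congr rfl fun n _ => ?_
    simp only [A, B, C, k]
    ring
  have hright : q ^ ((m + 1) * i) * (gordonSeries q r L (c + 1) i (m + 1) +
        q ^ (m + 1) * gordonSeries q r L c (i + 1) (m + 1)) =
      ∑ n ∈ Finset.range L, (A (n + 1) + B n) := by
    simp only [gordonSeries]
    rw [Finset.mul_sum, ← Finset.sum_add_distrib, Finset.mul_sum]
    refine Finset.sum_congr rfl fun n _ => ?_
    simp only [A, B]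
    rw [mul_assoc _ _ (C m (n + 1)), mul_comm _ (C m (n + 1)), hC1,
      mul_assoc _ _ (C m n), mul_comm _ (C m n), hC2]
    simp only [C, k]
    ring
  rw [← sub_eq_iff_eq_add', hleft, hright, Finset.sum_add_distrib, Finset.sum_add_distrib, hsum]

theorem gordonSeries_eq_prod {q : S} {r : ℕ → S} {L N i c : ℕ} (hq : q ^ (N + 1) = 0)
    (hL : 0 < L) (hi : 0 < i) :
    gordonSeries q r L i c N = ∏ j ∈ Finset.range N, r (j + 1) := by
  obtain ⟨L, rfl⟩ := Nat.exists_eq_add_one_of_ne_zero hL.ne'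
  rw [gordonSeries, Finset.sum_range_succ', Finset.sum_eq_zero, zero_add]
  · rw [pow_eq_zero_of_le_of_pow_eq_zero hq (e := (N + 1 + 2 * 0) * i) (by nlinarith)]
    simp [add_comm]
  · intro n _
    rw [pow_eq_zero_of_le_of_pow_eq_zero hq]
    · ring
    · have h1 : N ≤ N * (i + c) := Nat.le_mul_of_pos_right _ (by omega)
      have h2 : 1 ≤ (i + c) * (n + 1) := Nat.mul_pos (by omega) (by omega)
      nlinarith

/-- The recurrence of `opGenFun_gordonSet_succ` is solved by `gordonSeries` only. -/
theorem prod_mul_eq_gordonSeries {q : S} {r : ℕ → S} {L N k : ℕ}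
    (hr : ∀ j, r j * (1 + q ^ j) = 1 - q ^ j) (hq : q ^ L = 0) (hL : 0 < L) (hN : L ≤ N + 1)
    {G : ℕ → ℕ → S} (hG0 : ∀ m, G m 0 = 0) (hGN : ∀ i, 0 < i → G N i = 1)
    (hG : ∀ i c m, i + c + 1 = k → G m (i + 1) = G m i +
      q ^ ((m + 1) * i) * (G (m + 1) (c + 1) + q ^ (m + 1) * G (m + 1) c))
    {m : ℕ} (hm : m ≤ N) (i c : ℕ) (hk : i + c = k) :
    (∏ j ∈ Finset.range N, r (j + 1)) * G m i = gordonSeries q r L i c m := by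
  induction hm using Nat.decreasingInduction generalizing i c with
  | self =>
    rcases Nat.eq_zero_or_pos i with rfl | hi
    · rw [hG0, gordonSeries_zero, mul_zero]
    · rw [hGN i hi, gordonSeries_eq_prod (pow_eq_zero_of_le_of_pow_eq_zero hq hN) hL hi, mul_one]
  | of_succ m hm ih =>
    induction i generalizing c with
    | zero => rw [hG0, gordonSeries_zero, mul_zero]
    | succ i ih' =>
      rw [gordonSeries_succ hr hq, ← ih' (c + 1) (by omega), ← ih (c + 1) i (by omega),
        ← ih c (i + 1) (by omega), hG i c m (by omega)]
      ring

end GordonSeries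

section TripleProduct

/-- Gaussian binomial coefficients. -/
def qBinomial {R : Type*} [CommRing R] (Q : R) : ℕ → ℕ → R
  | _, 0 => 1
  | 0, _ + 1 => 0
  | n + 1, r + 1 => qBinomial Q n r + Q ^ (r + 1) * qBinomial Q n (r + 1)

variable {R : Type*} [CommRing R]

theorem qBinomial_zero_right (Q : R) (n : ℕ) : qBinomial Q n 0 = 1 := by
  cases n <;> rfl

theorem qBinomial_eq_zero_of_lt (Q : R) {n r : ℕ} (h : n < r) : qBinomial Q n r = 0 := by
  induction n generalizing r with
  | zero =>
    obtain ⟨r, rfl⟩ := Nat.exists_eq_add_one_of_ne_zero h.ne'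
    rfl
  | succ n ih =>
    obtain ⟨r, rfl⟩ := Nat.exists_eq_add_one_of_ne_zero (Nat.ne_of_gt (Nat.zero_lt_of_lt h))
    rw [qBinomial, ih (by omega), ih (by omega)]
    ring

theorem map_qBinomial {R' : Type*} [CommRing R'] (φ : R →+* R') (Q : R) (n r : ℕ) :
    φ (qBinomial Q n r) = qBinomial (φ Q) n r := by
  induction n generalizing r with
  | zero => cases r <;> simp [qBinomial]
  | succ n ih => cases r <;> simp [qBinomial, ih]

theorem qBinomial_mul_prod_mul_prod (Q : R) (r s : ℕ) :
    qBinomial Q (r + s) r * (∏ j ∈ Finset.range r, (1 - Q ^ (j + 1))) *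
      ∏ j ∈ Finset.range s, (1 - Q ^ (j + 1)) = ∏ j ∈ Finset.range (r + s), (1 - Q ^ (j + 1)) := by
  induction h : r + s generalizing r s with
  | zero =>
    obtain ⟨rfl, rfl⟩ : r = 0 ∧ s = 0 := by omega
    simp [qBinomial]
  | succ n ih =>
    rcases r with - | r
    · obtain rfl : s = n + 1 := by omega
      simp [qBinomial]
    have h1 := ih r s (by omega)
    rcases s with - | s
    · obtain rfl : r = n := by omega
      rw [qBinomial, qBinomial_eq_zero_of_lt Q (Nat.lt_succ_self r), Finset.prod_range_succ]
      rw [Finset.prod_range_zero] at h1 ⊢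
      linear_combination (1 - Q ^ (r + 1)) * h1
    · have h2 := ih (r + 1) s (by omega)
      obtain rfl : n = r + s + 1 := by omega
      rw [qBinomial, Finset.prod_range_succ _ (r + s + 1)]
      rw [Finset.prod_range_succ _ s] at h1 ⊢
      rw [Finset.prod_range_succ _ r] at h2 ⊢
      linear_combination (1 - Q ^ (r + 1)) * h1 + Q ^ (r + 1) * (1 - Q ^ (s + 1)) * h2

theorem prod_add_mul_pow (Q x y : R) (n : ℕ) :
    ∏ j ∈ Finset.range n, (y + x * Q ^ j) =
      ∑ r ∈ Finset.range (n + 1), Q ^ r.choose 2 * qBinomial Q n r * x ^ r * y ^ (n - r) := by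
  induction n generalizing x with
  | zero => simp [qBinomial]
  | succ n ih =>
    have hprod : ∏ j ∈ Finset.range (n + 1), (y + x * Q ^ j) =
        (y + x) * ∏ j ∈ Finset.range n, (y + x * Q * Q ^ j) := by
      rw [Finset.prod_range_succ', mul_comm]
      simp [pow_succ', mul_assoc]
    let f (r : ℕ) : R := Q ^ (r.choose 2 + r) * qBinomial Q n r * x ^ r * y ^ (n + 1 - r)
    have hf0 : ∑ r ∈ Finset.range (n + 2), f r =
        ∑ r ∈ Finset.range (n + 1), f r := by
      rw [Finset.sum_range_succ, add_eq_left]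
      simp [f, qBinomial_eq_zero_of_lt Q (Nat.lt_succ_self n)]
    have hf : y * ∑ r ∈ Finset.range (n + 1),
        Q ^ r.choose 2 * qBinomial Q n r * (x * Q) ^ r * y ^ (n - r) =
          ∑ r ∈ Finset.range (n + 2), f r := by
      rw [hf0, Finset.mul_sum]
      refine Finset.sum_congr rfl fun r hr => ?_
      simp only [f]
      rw [Nat.sub_add_comm (Nat.lt_succ_iff.1 (Finset.mem_range.1 hr))]
      ring
    rw [hprod, ih, add_mul, hf, Finset.sum_range_succ', Finset.sum_range_succ' _ (n + 1),
      Finset.mul_sum, add_right_comm, ← Finset.sum_add_distrib]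
    congr 1
    · refine Finset.sum_congr rfl fun r hr => ?_
      have hc : (r + 1).choose 2 = r + r.choose 2 := by
        rw [Nat.choose_succ_succ' r 1, Nat.choose_one_right]
      simp only [f]
      rw [qBinomial, hc, Nat.add_sub_add_right]
      ring
    · simp [f, qBinomial_zero_right]

theorem choose_two_add_s13 (a b : ℕ) : (a + b).choose 2 = a.choose 2 + b.choose 2 + a * b := by
  induction b with
  | zero => simp
  | succ b ih =>
    rw [← add_assoc, Nat.choose_succ_succ' (a + b) 1, Nat.choose_succ_succ' b 1, ih]
    simp
    ring

theorem choose_two_add_choose_two_succ (n : ℕ) : n.choose 2 + (n + 1).choose 2 = n * n := by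
  induction n with
  | zero => rfl
  | succ n ih =>
    rw [choose_two_add_s13 (n + 1) 1]
    rw [choose_two_add_s13 n 1] at ih ⊢
    simp at ih ⊢
    linarith

theorem prod_one_sub_mul_one_sub [IsDomain R] {u v : R} (hu : u ≠ 0) (hv : v ≠ 0) (L : ℕ) :
    ∏ j ∈ Finset.range L, ((1 - v * (u * v) ^ j) * (1 - u * (u * v) ^ j)) =
      ∑ n ∈ Finset.range L, (-1) ^ (n + 1) * qBinomial (u * v) (L + L) (L - 1 - n) *
        (u ^ (n + 1).choose 2 * v ^ (n + 2).choose 2) +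
      ∑ n ∈ Finset.range (L + 1), (-1) ^ n * qBinomial (u * v) (L + L) (L + n) *
        (u ^ (n + 1).choose 2 * v ^ n.choose 2) := by
  let Q := u * v
  let W := (-u) ^ L * Q ^ (L.choose 2 + L * L)
  have hW : W ≠ 0 :=
    mul_ne_zero (pow_ne_zero _ (neg_ne_zero.2 hu)) (pow_ne_zero _ (mul_ne_zero hu hv))
  have hfst : ∏ j ∈ Finset.range L, (Q ^ L + -u * Q ^ j) =
      (-u) ^ L * Q ^ L.choose 2 * ∏ j ∈ Finset.range L, (1 - v * Q ^ j) := by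
    rw [← Finset.prod_range_reflect (fun j => 1 - v * Q ^ j), Nat.choose_two_right,
      ← Finset.sum_range_id, ← Finset.prod_pow_eq_pow_sum]
    have hconst : (-u) ^ L = ∏ _j ∈ Finset.range L, -u := by simp
    rw [hconst, ← Finset.prod_mul_distrib, ← Finset.prod_mul_distrib]
    refine Finset.prod_congr rfl fun j hj => ?_
    obtain ⟨d, rfl⟩ := Nat.exists_eq_add_of_lt (Finset.mem_range.1 hj)
    rw [show j + d + 1 - 1 - j = d by omega]
    simp only [Q]
    ring
  have hsnd : ∏ j ∈ Finset.range L, (Q ^ L + -u * Q ^ (L + j)) =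
      Q ^ (L * L) * ∏ j ∈ Finset.range L, (1 - u * Q ^ j) := by
    have hconst : Q ^ (L * L) = ∏ _j ∈ Finset.range L, Q ^ L := by simp [pow_mul]
    rw [hconst, ← Finset.prod_mul_distrib]
    exact Finset.prod_congr rfl fun j _ => by ring
  have hprod := prod_add_mul_pow Q (-u) (Q ^ L) (L + L)
  rw [Finset.prod_range_add, hfst, hsnd, add_assoc, Finset.sum_range_add,
    ← Finset.sum_range_reflect] at hprod
  refine mul_left_cancel₀ hW ?_
  rw [mul_add, Finset.mul_sum, Finset.mul_sum, Finset.prod_mul_distrib]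
  refine Eq.trans ?_ (hprod.trans ?_)
  · simp only [W, Q]
    ring
  congr 1
  · refine Finset.sum_congr rfl fun n hn => ?_
    obtain ⟨d, rfl⟩ := Nat.exists_eq_add_of_lt (Finset.mem_range.1 hn)
    rw [show n + d + 1 - 1 - n = d by omega,
      show n + d + 1 + (n + d + 1) - d = d + 2 * (n + 1) by omega]
    have h2 := choose_two_add_choose_two_succ (n + 1)
    have h3 := choose_two_add_choose_two_succ n
    have h4 := choose_two_add_s13 n 1
    rw [Nat.choose_eq_zero_of_lt one_lt_two] at h4
    set K := n + d + 1 with hK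
    have h1 : K.choose 2 = d.choose 2 + (n + 1).choose 2 + d * (n + 1) := by
      rw [← choose_two_add_s13, hK, add_comm n d, add_assoc]
    have hs : (-1 : R) ^ K * (-1) ^ (n + 1) = (-1) ^ d := by
      rw [← pow_add, show K + (n + 1) = d + 2 * (n + 1) by omega, pow_add, pow_mul]
      simp
    have hu : K + (K.choose 2 + K * K) + (n + 1).choose 2 =
        d.choose 2 + d + K * (d + 2 * (n + 1)) := by
      rw [h1]
      nlinarith [h2, h3, h4, hK]
    have hv : (K.choose 2 + K * K) + (n + 2).choose 2 =
        d.choose 2 + K * (d + 2 * (n + 1)) := by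
      rw [h1]
      nlinarith [h2, h3, h4, hK]
    symm
    calc W * ((-1) ^ (n + 1) * qBinomial (u * v) (K + K) d *
          (u ^ (n + 1).choose 2 * v ^ (n + 2).choose 2)) =
        ((-1) ^ K * (-1) ^ (n + 1)) * qBinomial Q (K + K) d *
          (u ^ (K + (K.choose 2 + K * K) + (n + 1).choose 2) *
            v ^ ((K.choose 2 + K * K) + (n + 2).choose 2)) := by
          simp only [W, Q, neg_pow u]
          ring
      _ = _ := by
          rw [hs, hu, hv]
          simp only [Q, neg_pow u d]
          ring
  · refine Finset.sum_congr rfl fun n hn => ?_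
    obtain ⟨d, rfl⟩ := Nat.exists_eq_add_of_le (Nat.lt_succ_iff.1 (Finset.mem_range.1 hn))
    rw [show n + d + (n + d) - (n + d + n) = d by omega]
    have h2 := choose_two_add_choose_two_succ n
    have h4 := choose_two_add_s13 n 1
    rw [Nat.choose_eq_zero_of_lt one_lt_two] at h4
    set K := n + d with hK
    have h1 := choose_two_add_s13 K n
    have hs : (-1 : R) ^ K * (-1) ^ n = (-1) ^ (K + n) := (pow_add _ _ _).symm
    have hu : K + (K.choose 2 + K * K) + (n + 1).choose 2 =
        (K + n).choose 2 + (K + n) + K * d := by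
      rw [h1]
      nlinarith [h2, h4, hK]
    have hv : (K.choose 2 + K * K) + n.choose 2 = (K + n).choose 2 + K * d := by
      rw [h1]
      nlinarith [h2, h4, hK]
    symm
    calc W * ((-1) ^ n * qBinomial (u * v) (K + K) (K + n) *
          (u ^ (n + 1).choose 2 * v ^ n.choose 2)) =
        ((-1) ^ K * (-1) ^ n) * qBinomial Q (K + K) (K + n) *
          (u ^ (K + (K.choose 2 + K * K) + (n + 1).choose 2) *
            v ^ ((K.choose 2 + K * K) + n.choose 2)) := by
          simp only [W, Q, neg_pow u]
          ring
      _ = _ := by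
          rw [hs, hu, hv]
          simp only [Q, neg_pow u (K + n)]
          ring

end TripleProduct

section Nilpotent

variable {S : Type*} [CommRing S]

theorem isUnit_one_sub_pow {q : S} {L : ℕ} (hq : q ^ L = 0) {j : ℕ} (hj : 0 < j) :
    IsUnit (1 - q ^ j) :=
  IsNilpotent.isUnit_one_sub ((show IsNilpotent q from ⟨L, hq⟩).pow_of_pos hj.ne')

theorem isUnit_one_add_pow {q : S} {L : ℕ} (hq : q ^ L = 0) {j : ℕ} (hj : 0 < j) :
    IsUnit (1 + q ^ j) :=
  IsNilpotent.isUnit_one_add ((show IsNilpotent q from ⟨L, hq⟩).pow_of_pos hj.ne')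

theorem prod_one_sub_pow_mul_of_le {Q z : S} {w t : ℕ} (hz : Q ^ (w + 1) * z = 0) (hw : w ≤ t) :
    (∏ j ∈ Finset.range t, (1 - Q ^ (j + 1))) * z =
      (∏ j ∈ Finset.range w, (1 - Q ^ (j + 1))) * z := by
  induction t, hw using Nat.le_induction with
  | base => rfl
  | succ t hw ih =>
    obtain ⟨d, rfl⟩ := Nat.exists_eq_add_of_le hw
    rw [Finset.prod_range_succ]
    linear_combination ih -
      (∏ j ∈ Finset.range (w + d), (1 - Q ^ (j + 1))) * Q ^ d * hz

theorem prod_one_sub_pow_mul_qBinomial_mul {Q z : S} {w r s t : ℕ} (hQ : IsNilpotent Q)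
    (hz : Q ^ (w + 1) * z = 0) (hr : w ≤ r) (hs : w ≤ s) (ht : w ≤ t) :
    (∏ j ∈ Finset.range t, (1 - Q ^ (j + 1))) * (qBinomial Q (r + s) r * z) = z := by
  have hu : IsUnit (∏ j ∈ Finset.range w, (1 - Q ^ (j + 1))) := by
    obtain ⟨L, hL⟩ := hQ
    exact IsUnit.prod_iff.2 fun j _ => isUnit_one_sub_pow hL j.succ_pos
  have h := qBinomial_mul_prod_mul_prod Q r s
  have h1 := prod_one_sub_pow_mul_of_le hz hr
  have h2 := prod_one_sub_pow_mul_of_le hz hs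
  have h3 := prod_one_sub_pow_mul_of_le hz ht
  have h4 := prod_one_sub_pow_mul_of_le hz (hr.trans (Nat.le_add_right r s))
  refine hu.mul_left_cancel ?_
  set g := qBinomial Q (r + s) r
  set E := fun t => ∏ j ∈ Finset.range t, (1 - Q ^ (j + 1))
  change E r * z = E w * z at h1
  change E s * z = E w * z at h2
  change E t * z = E w * z at h3
  change E (r + s) * z = E w * z at h4
  change g * E r * E s = E (r + s) at h
  change E w * (E t * (g * z)) = E w * z
  linear_combination g * E w * h3 - g * E w * h1 - g * E r * h2 + z * h + h4

theorem gordonSeries_eq_prod_mul_prod (r : ℕ → S) {q : S} {L : ℕ} (hq : q ^ L = 0) (a c : ℕ)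
    (ha : 0 < a) :
    gordonSeries q r L a c 0 = (∏ j ∈ Finset.range L, (1 - q ^ (2 * (a + c) * (j + 1)))) *
      ∏ j ∈ Finset.range L, ((1 - q ^ (a + 2 * (a + c) * j)) *
        (1 - q ^ (a + 2 * c + 2 * (a + c) * j))) := by
  have hX (e : ℕ) : (Polynomial.X ^ e : Polynomial ℤ) ≠ 0 := pow_ne_zero e Polynomial.X_ne_zero
  have h := congrArg (Polynomial.aeval q)
    (prod_one_sub_mul_one_sub (hX (a + 2 * c)) (hX a) L)
  have hQ : q ^ (a + 2 * c) * q ^ a = q ^ (2 * (a + c)) := by rw [← pow_add]; congr 1; ring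
  have hm (n r : ℕ) : Polynomial.aeval q
      (qBinomial (Polynomial.X ^ (a + 2 * c) * Polynomial.X ^ a : Polynomial ℤ) n r) =
        qBinomial (q ^ (2 * (a + c))) n r := by
    have := map_qBinomial (Polynomial.aeval q : Polynomial ℤ →ₐ[ℤ] S).toRingHom
      (Polynomial.X ^ (a + 2 * c) * Polynomial.X ^ a) n r
    simpa [hQ] using this
  simp only [map_prod, map_add, map_sum, map_mul, map_sub, map_one, map_pow, map_neg,
    Polynomial.aeval_X, hm, hQ] at h
  have hprod : ∏ j ∈ Finset.range L, ((1 - q ^ (a + 2 * (a + c) * j)) *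
        (1 - q ^ (a + 2 * c + 2 * (a + c) * j))) =
      ∏ j ∈ Finset.range L, ((1 - q ^ a * (q ^ (2 * (a + c))) ^ j) *
        (1 - q ^ (a + 2 * c) * (q ^ (2 * (a + c))) ^ j)) :=
    Finset.prod_congr rfl fun j _ => by ring
  have hprod' : ∏ j ∈ Finset.range L, (1 - q ^ (2 * (a + c) * (j + 1))) =
      ∏ j ∈ Finset.range L, (1 - (q ^ (2 * (a + c))) ^ (j + 1)) :=
    Finset.prod_congr rfl fun j _ => by ring
  have hnil : IsNilpotent (q ^ (2 * (a + c))) :=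
    (show IsNilpotent q from ⟨L, hq⟩).pow_of_pos (by omega)
  have hu (n : ℕ) : (q ^ (a + 2 * c)) ^ (n + 1).choose 2 * (q ^ a) ^ n.choose 2 =
      q ^ (n * ((a + c) * n + c)) := by
    rw [← pow_mul, ← pow_mul, ← pow_add]
    congr 1
    have h1 := choose_two_add_choose_two_succ n
    have h2 := choose_two_add_s13 n 1
    rw [Nat.choose_eq_zero_of_lt one_lt_two] at h2
    have h3 : 2 * (n + 1).choose 2 = n * n + n := by linarith
    linear_combination a * h1 + c * h3
  have hv (n : ℕ) : (q ^ (a + 2 * c)) ^ (n + 1).choose 2 * (q ^ a) ^ (n + 2).choose 2 =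
      q ^ (n * ((a + c) * n + c)) * q ^ ((1 + 2 * n) * a) := by
    rw [← hu, ← pow_mul, ← pow_mul, ← pow_mul, ← pow_add, ← pow_add, ← pow_add]
    congr 1
    rw [choose_two_add_s13 n 2, Nat.choose_self]
    ring
  have hle (n : ℕ) : n ≤ n * ((a + c) * n + c) := by
    rcases Nat.eq_zero_or_pos n with rfl | hn
    · exact Nat.zero_le _
    · exact Nat.le_mul_of_pos_right n (by positivity)
  simp only [gordonSeries, zero_mul, zero_add, Finset.prod_range_zero, mul_one]
  rw [hprod, hprod', h, Finset.sum_range_succ, hu L, pow_eq_zero_of_le_of_pow_eq_zero hq (hle L),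
    mul_zero, add_zero, ← Finset.sum_add_distrib, Finset.mul_sum]
  refine Finset.sum_congr rfl fun n hn => ?_
  rw [Finset.mem_range] at hn
  obtain ⟨d, rfl⟩ := Nat.exists_eq_add_of_lt hn
  have e1 := prod_one_sub_pow_mul_qBinomial_mul (w := d + 1) (r := n + d + 1 + n) (s := d + 1)
    (t := n + d + 1) (z := q ^ (n * ((a + c) * n + c))) hnil (by
      rw [← pow_mul, ← pow_add]
      refine pow_eq_zero_of_le_of_pow_eq_zero hq ?_
      nlinarith [hle n]) (by omega) le_rfl (by omega)
  have e2 := prod_one_sub_pow_mul_qBinomial_mul (w := d) (r := d) (s := n + d + 1 + n + 1)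
    (t := n + d + 1) (z := q ^ (n * ((a + c) * n + c)) * q ^ ((1 + 2 * n) * a)) hnil (by
      rw [← pow_mul, ← pow_add, ← pow_add]
      refine pow_eq_zero_of_le_of_pow_eq_zero hq ?_
      nlinarith [hle n]) le_rfl (by omega) (by omega)
  rw [hu, hv, show n + d + 1 - 1 - n = d by omega]
  rw [show n + d + 1 + n + (d + 1) = n + d + 1 + (n + d + 1) by ring] at e1
  rw [show d + (n + d + 1 + n + 1) = n + d + 1 + (n + d + 1) by ring] at e2
  linear_combination (-1) ^ n * e2 - (-1) ^ n * e1

end Nilpotent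

section Residues

variable {S : Type*} [CommRing S]

open scoped Classical in
theorem prod_not_dvd_mul_prod (f : ℕ → S) {k : ℕ} (hk : 0 < k) {A : Set ℕ}
    (hA : A = {i | ¬ k ∣ i}) (M : ℕ) :
    (∏ i ∈ Finset.range (k * M), if i + 1 ∈ A then f (i + 1) else 1) *
      ∏ j ∈ Finset.range M, f (k * (j + 1)) = ∏ i ∈ Finset.range (k * M), f (i + 1) := by
  induction M with
  | zero => simp
  | succ M ih =>
    have hblock : (∏ x ∈ Finset.range k,
        if k * M + x + 1 ∈ A then f (k * M + x + 1) else 1) * f (k * (M + 1)) =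
          ∏ x ∈ Finset.range k, f (k * M + x + 1) := by
      obtain ⟨k, rfl⟩ := Nat.exists_eq_add_one_of_ne_zero hk.ne'
      rw [Finset.prod_range_succ, Finset.prod_range_succ _ k, if_neg, mul_one]
      · congr 1
        refine Finset.prod_congr rfl fun x hx => if_pos ?_
        rw [Finset.mem_range] at hx
        rw [hA, Set.mem_ofPred_eq, add_assoc, Nat.dvd_add_right (dvd_mul_right _ _)]
        exact Nat.not_dvd_of_pos_of_lt x.succ_pos (by omega)
      · rw [hA, Set.mem_ofPred_eq, not_not, add_assoc, ← Nat.mul_succ]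
        exact dvd_mul_right _ _
    rw [Nat.mul_succ, Finset.prod_range_add _ (k * M) k, Finset.prod_range_add _ (k * M) k,
      Finset.prod_range_succ _ M, ← ih, ← hblock]
    ring

open scoped Classical in
theorem prod_residues_mul_prod (f : ℕ → S) {a c : ℕ} (ha : 0 < a) (hc : 0 < c) {A : Set ℕ}
    (hA : A = {i | i % (2 * (a + c)) ≠ 0 ∧ i % (2 * (a + c)) ≠ a ∧
      i % (2 * (a + c)) ≠ 2 * (a + c) - a}) (M : ℕ) :
    (∏ i ∈ Finset.range (2 * (a + c) * M), if i + 1 ∈ A then f (i + 1) else 1) *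
      ((∏ j ∈ Finset.range M, f (2 * (a + c) * (j + 1))) *
        ∏ j ∈ Finset.range M, (f (a + 2 * (a + c) * j) * f (a + 2 * c + 2 * (a + c) * j))) =
      ∏ i ∈ Finset.range (2 * (a + c) * M), f (i + 1) := by
  set d := 2 * (a + c) with hd
  induction M with
  | zero => simp
  | succ M ih =>
    have hmem {x : ℕ} (hx : x < d) :
        d * M + x + 1 ∉ A ↔ x = a - 1 ∨ x = a + 2 * c - 1 ∨ x = d - 1 := by
      simp only [hA, Set.mem_ofPred_eq, add_assoc, Nat.mul_add_mod]
      rcases Nat.lt_or_ge (x + 1) d with h | h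
      · rw [Nat.mod_eq_of_lt h]
        omega
      · rw [show x + 1 = d by omega, Nat.mod_self]
        omega
    have hbad : ∏ x ∈ Finset.range d, (if d * M + x + 1 ∈ A then 1 else f (d * M + x + 1)) =
        f (a + d * M) * f (a + 2 * c + d * M) * f (d * (M + 1)) := by
      rw [← Finset.prod_subset (s₁ := {a - 1, a + 2 * c - 1, d - 1})]
      · rw [Finset.prod_insert, Finset.prod_insert, Finset.prod_singleton,
          if_neg ((hmem (by omega)).2 (by simp)), if_neg ((hmem (by omega)).2 (by simp)),
          if_neg ((hmem (by omega)).2 (by simp)), ← mul_assoc, Nat.mul_succ,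
          show d * M + (a - 1) + 1 = a + d * M by omega,
          show d * M + (a + 2 * c - 1) + 1 = a + 2 * c + d * M by omega,
          show d * M + (d - 1) + 1 = d * M + d by omega]
        · simp only [Finset.mem_singleton]
          omega
        · simp only [Finset.mem_insert, Finset.mem_singleton]
          omega
      · intro x
        simp only [Finset.mem_insert, Finset.mem_singleton, Finset.mem_range]
        omega
      · intro x hx hx'
        rw [Finset.mem_range] at hx
        refine if_pos (not_not.1 fun h => hx' ?_)
        simpa using (hmem hx).1 h
    have hblock : (∏ x ∈ Finset.range d,
        if d * M + x + 1 ∈ A then f (d * M + x + 1) else 1) *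
          (f (a + d * M) * f (a + 2 * c + d * M) * f (d * (M + 1))) =
          ∏ x ∈ Finset.range d, f (d * M + x + 1) := by
      rw [← hbad, ← Finset.prod_mul_distrib]
      exact Finset.prod_congr rfl fun x _ => by split_ifs <;> simp
    rw [Nat.mul_succ, Finset.prod_range_add _ (d * M) d, Finset.prod_range_add _ (d * M) d,
      Finset.prod_range_succ _ M, Finset.prod_range_succ _ M, ← ih, ← hblock]
    ring

end Residues

open PowerSeries in
theorem coeff_opGenFun_eq_of_mk_eq {L n : ℕ} (hn : n < L) {s t : Set ((ℕ →₀ ℕ) × (ℕ →₀ ℕ))}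
    (h : Ideal.Quotient.mk (Ideal.span {(X : ℤ⟦X⟧) ^ L}) (opGenFun s) =
      Ideal.Quotient.mk (Ideal.span {(X : ℤ⟦X⟧) ^ L}) (opGenFun t)) :
    Set.ncard {p | p ∈ s ∧ opWt p = n} = Set.ncard {p | p ∈ t ∧ opWt p = n} := by
  rw [Ideal.Quotient.eq, Ideal.mem_span_singleton, X_pow_dvd_iff] at h
  have := h n hn
  rw [map_sub, opGenFun, opGenFun, coeff_mk, coeff_mk, sub_eq_zero] at this
  exact_mod_cast this

theorem zero_mem_restrictedSet (A B : Set ℕ) (m : ℕ) : 0 ∈ restrictedSet A B m := by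
  simp [restrictedSet, IsOverPtn]

theorem zero_mem_gordonSet {k m a : ℕ} (hk : 0 < k) (ha : 0 < a) : 0 ∈ gordonSet k m a := by
  simp [gordonSet, IsOverPtn, ha, hk]

theorem opGenFun_gordonSet_zero (k m : ℕ) : opGenFun (gordonSet k m 0) = 0 := by
  ext n
  simp [opGenFun, gordonSet]

section Truncation

open PowerSeries

variable {S : Type*} [CommRing S]

theorem map_opGenFun_eq_one (φ : ℤ⟦X⟧ →+* S) {N : ℕ} (hφ : φ X ^ (N + 1) = 0)
    {s : Set ((ℕ →₀ ℕ) × (ℕ →₀ ℕ))} (h0 : 0 ∈ s)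
    (hs : ∀ p ∈ s, ∀ i ≤ N, p.1 i = 0 ∧ p.2 i = 0) : φ (opGenFun s) = 1 := by
  obtain ⟨g, hg⟩ := X_pow_dvd_opGenFun_sub_one h0 hs
  rw [eq_add_of_sub_eq hg, map_add, map_mul, map_pow, hφ, zero_mul, zero_add, map_one]

theorem prod_mul_map_opGenFun_gordonSet (φ : ℤ⟦X⟧ →+* S) {L N : ℕ} {r : ℕ → S}
    (hr : ∀ j, r j * (1 + φ X ^ j) = 1 - φ X ^ j) (hφ : φ X ^ L = 0) (hL : 0 < L)
    (hN : L ≤ N + 1) {a c : ℕ} (hk : 0 < a + c) :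
    (∏ j ∈ Finset.range N, r (j + 1)) * φ (opGenFun (gordonSet (a + c) 0 a)) =
      gordonSeries (φ X) r L a c 0 := by
  refine prod_mul_eq_gordonSeries hr hφ hL hN (G := fun m i => φ (opGenFun (gordonSet (a + c) m i)))
    ?_ ?_ ?_ (Nat.zero_le N) a c rfl
  · simp [opGenFun_gordonSet_zero]
  · exact fun i hi => map_opGenFun_eq_one φ (pow_eq_zero_of_le_of_pow_eq_zero hφ hN)
      (zero_mem_gordonSet hk hi) fun p hp => hp.2.1
  · intro i c' m h
    simp only [← h, opGenFun_gordonSet_succ, map_add, map_mul, map_pow]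

open scoped Classical in
theorem map_opGenFun_restrictedSet_mul_prod (φ : ℤ⟦X⟧ →+* S) {N : ℕ} (hφ : φ X ^ (N + 1) = 0)
    (A B : Set ℕ) :
    φ (opGenFun (restrictedSet A B 0)) *
        ∏ i ∈ Finset.range N, (if i + 1 ∈ A then 1 - φ X ^ (i + 1) else 1) =
      ∏ i ∈ Finset.range N, (if i + 1 ∈ B then 1 + φ X ^ (i + 1) else 1) := by
  have h := congrArg φ (opGenFun_restrictedSet_zero_mul_prod A B N)
  rw [map_mul, map_mul, map_opGenFun_eq_one φ hφ (zero_mem_restrictedSet A B N)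
    (fun p hp => hp.2.1), mul_one] at h
  simpa only [map_prod, apply_ite φ, map_sub, map_add, map_one, map_pow] using h

theorem exists_mul_one_add_pow_eq {q : S} {L : ℕ} (hq : q ^ L = 0) :
    ∃ r : ℕ → S, ∀ j, r j * (1 + q ^ j) = 1 - q ^ j := by
  have (j : ℕ) : ∃ x, x * (1 + q ^ j) = 1 - q ^ j := by
    rcases Nat.eq_zero_or_pos j with rfl | hj
    · exact ⟨0, by simp⟩
    · obtain ⟨x, hx⟩ := (isUnit_one_add_pow hq hj).exists_left_inv
      exact ⟨(1 - q ^ j) * x, by rw [mul_assoc, hx, mul_one]⟩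
  exact ⟨fun j => (this j).choose, fun j => (this j).choose_spec⟩

theorem isUnit_prod_of_mul_one_add_pow_eq {q : S} {L : ℕ} (hq : q ^ L = 0) {r : ℕ → S}
    (hr : ∀ j, r j * (1 + q ^ j) = 1 - q ^ j) (N : ℕ) :
    IsUnit (∏ j ∈ Finset.range N, r (j + 1)) :=
  IsUnit.prod_iff.2 fun j _ => isUnit_of_mul_isUnit_left
    ((hr (j + 1)).symm ▸ isUnit_one_sub_pow hq j.succ_pos)

theorem map_opGenFun_gordonSet_eq_of_lt (φ : ℤ⟦X⟧ →+* S) {L : ℕ} (hφ : φ X ^ L = 0) (hL : 0 < L)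
    {a c : ℕ} (ha : 0 < a) (hc : 0 < c) :
    φ (opGenFun (gordonSet (a + c) 0 a)) =
      φ (opGenFun (restrictedSet {i | i % (2 * (a + c)) ≠ 0 ∧ i % (2 * (a + c)) ≠ a ∧
        i % (2 * (a + c)) ≠ 2 * (a + c) - a} Set.univ 0)) := by
  classical
  obtain ⟨r, hr⟩ := exists_mul_one_add_pow_eq hφ
  set A := {i | i % (2 * (a + c)) ≠ 0 ∧ i % (2 * (a + c)) ≠ a ∧
    i % (2 * (a + c)) ≠ 2 * (a + c) - a} with hA
  have hprod := prod_residues_mul_prod (fun i => 1 - φ X ^ i) ha hc hA L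
  set N := 2 * (a + c) * L
  have hN : L ≤ N + 1 := (Nat.le_mul_of_pos_left L (by omega)).trans (Nat.le_succ _)
  refine (isUnit_prod_of_mul_one_add_pow_eq hφ hr N).mul_left_cancel ?_
  have hsub : IsUnit (∏ i ∈ Finset.range N, (1 - φ X ^ (i + 1))) :=
    IsUnit.prod_iff.2 fun j _ => isUnit_one_sub_pow hφ j.succ_pos
  have hG := prod_mul_map_opGenFun_gordonSet φ hr hφ hL hN (a := a) (c := c) (by omega)
  have hD := map_opGenFun_restrictedSet_mul_prod φ (pow_eq_zero_of_le_of_pow_eq_zero hφ hN)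
    A Set.univ
  have hr' : (∏ i ∈ Finset.range N, r (i + 1)) * ∏ i ∈ Finset.range N, (1 + φ X ^ (i + 1)) =
      ∏ i ∈ Finset.range N, (1 - φ X ^ (i + 1)) := by
    rw [← Finset.prod_mul_distrib]
    exact Finset.prod_congr rfl fun i _ => hr _
  rw [hG, gordonSeries_eq_prod_mul_prod r hφ a c ha]
  simp only [Set.mem_univ, if_true] at hD
  refine hsub.mul_left_cancel ?_
  nth_rw 2 [← hprod]
  rw [← hr', ← hD]
  ring

theorem map_opGenFun_gordonSet_eq_self (φ : ℤ⟦X⟧ →+* S) {L : ℕ} (hφ : φ X ^ L = 0) (hL : 0 < L)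
    {k : ℕ} (hk : 0 < k) :
    φ (opGenFun (gordonSet k 0 k)) =
      φ (opGenFun (restrictedSet {i | ¬ k ∣ i} {i | ¬ k ∣ i} 0)) := by
  classical
  obtain ⟨r, hr⟩ := exists_mul_one_add_pow_eq hφ
  set A := {i | ¬ k ∣ i} with hA
  have hprod_sub := prod_not_dvd_mul_prod (fun i => 1 - φ X ^ i) hk hA L
  have hprod_add := prod_not_dvd_mul_prod (fun i => 1 + φ X ^ i) hk hA L
  set N := k * L
  have hN : L ≤ N + 1 := (Nat.le_mul_of_pos_left L hk).trans (Nat.le_succ _)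
  refine (isUnit_prod_of_mul_one_add_pow_eq hφ hr N).mul_left_cancel ?_
  have hG := prod_mul_map_opGenFun_gordonSet φ hr hφ hL hN (a := k) (c := 0) hk
  have hD := map_opGenFun_restrictedSet_mul_prod φ (pow_eq_zero_of_le_of_pow_eq_zero hφ hN) A A
  have hr' : (∏ i ∈ Finset.range N, r (i + 1)) * ∏ i ∈ Finset.range N, (1 + φ X ^ (i + 1)) =
      ∏ i ∈ Finset.range N, (1 - φ X ^ (i + 1)) := by
    rw [← Finset.prod_mul_distrib]
    exact Finset.prod_congr rfl fun i _ => hr _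
  have hrk (j : ℕ) : r (k * j) * (1 + (φ X ^ k) ^ j) = 1 - (φ X ^ k) ^ j := by
    rw [← pow_mul, hr]
  have hrk' : (∏ j ∈ Finset.range L, r (k * (j + 1))) *
      ∏ j ∈ Finset.range L, (1 + φ X ^ (k * (j + 1))) =
        ∏ j ∈ Finset.range L, (1 - φ X ^ (k * (j + 1))) := by
    rw [← Finset.prod_mul_distrib]
    exact Finset.prod_congr rfl fun i _ => hr _
  have hGauss : ∏ j ∈ Finset.range L, r (k * (j + 1)) = gordonSeries (φ X) r L k 0 0 := by
    have h := prod_mul_eq_gordonSeries (k := 1) hrk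
      (by rw [← pow_mul]; exact pow_eq_zero_of_le_of_pow_eq_zero hφ (Nat.le_mul_of_pos_left L hk))
      hL (Nat.le_succ L) (G := fun _ i => if i = 0 then 0 else 1) (by simp)
      (by intro i hi; simp [hi.ne'])
      (by
        intro i c m h
        obtain ⟨rfl, rfl⟩ : i = 0 ∧ c = 0 := by omega
        simp) (Nat.zero_le L) 1 0 rfl
    rw [if_neg one_ne_zero, mul_one] at h
    rw [h]
    simp only [gordonSeries]
    refine Finset.sum_congr rfl fun n _ => ?_
    simp only [Finset.prod_range_zero, ← pow_mul]
    congr 4 <;> ring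
  have hadd : IsUnit (∏ j ∈ Finset.range L, (1 + φ X ^ (k * (j + 1)))) :=
    IsUnit.prod_iff.2 fun j _ => isUnit_one_add_pow hφ (by positivity)
  have hsub : IsUnit (∏ i ∈ Finset.range N, (1 - φ X ^ (i + 1))) :=
    IsUnit.prod_iff.2 fun j _ => isUnit_one_sub_pow hφ j.succ_pos
  rw [add_zero] at hG
  rw [hG, ← hGauss]
  refine (hsub.mul hadd).mul_left_cancel ?_
  rw [mul_assoc, mul_comm _ (∏ j ∈ Finset.range L, r (k * (j + 1))), hrk']
  nth_rw 2 [← hprod_sub]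
  rw [← hr', ← hprod_add, ← hD]
  ring

end Truncation

theorem setOf_gordonSet (k a n : ℕ) :
    {p : (ℕ →₀ ℕ) × (ℕ →₀ ℕ) | IsOverPtn p ∧ opWt p = n ∧
      p.1 1 < a ∧ ∀ i : ℕ, 1 ≤ i → p.1 i + p.2 i + p.1 (i + 1) < k} =
    {p | p ∈ gordonSet k 0 a ∧ opWt p = n} := by
  ext p
  simp only [gordonSet, IsOverPtn, Set.mem_ofPred_eq, Nat.le_zero, forall_eq, zero_add,
    Nat.succ_le_iff]
  tauto

/-- Gordon's theorem for overpartitions (Lovejoy; Chen–Sang–Shi):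
for `2 ≤ k`, `1 ≤ a ≤ k` and all `n`, the number of overpartitions of `n` with
`f_1 < a` and `f_i + f_{ī} + f_{i+1} < k` for all `i ≥ 1` equals, when `a < k`,
the number of overpartitions of `n` whose non-overlined parts are not congruent to
`0, ±a (mod 2k)`, and, when `a = k`, the number of overpartitions of `n` with no
part divisible by `k`. -/
theorem gordon_overpartitions (k a n : ℕ) (hk : 2 ≤ k) (ha : 1 ≤ a) (hak : a ≤ k) :
    (a < k →
      Set.ncard {p : (ℕ →₀ ℕ) × (ℕ →₀ ℕ) | IsOverPtn p ∧ opWt p = n ∧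
        p.1 1 < a ∧ ∀ i : ℕ, 1 ≤ i → p.1 i + p.2 i + p.1 (i + 1) < k}
      = Set.ncard {p : (ℕ →₀ ℕ) × (ℕ →₀ ℕ) | IsOverPtn p ∧ opWt p = n ∧
        ∀ i : ℕ, 0 < p.1 i →
          i % (2 * k) ≠ 0 ∧ i % (2 * k) ≠ a ∧ i % (2 * k) ≠ 2 * k - a}) ∧
    (a = k →
      Set.ncard {p : (ℕ →₀ ℕ) × (ℕ →₀ ℕ) | IsOverPtn p ∧ opWt p = n ∧
        p.1 1 < a ∧ ∀ i : ℕ, 1 ≤ i → p.1 i + p.2 i + p.1 (i + 1) < k}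
      = Set.ncard {p : (ℕ →₀ ℕ) × (ℕ →₀ ℕ) | IsOverPtn p ∧ opWt p = n ∧
        ∀ i : ℕ, 0 < p.1 i + p.2 i → ¬ k ∣ i}) := by
  rw [setOf_gordonSet]
  let φ := Ideal.Quotient.mk (Ideal.span {(PowerSeries.X : PowerSeries ℤ) ^ (n + 1)})
  have hφ : φ PowerSeries.X ^ (n + 1) = 0 := by
    rw [← map_pow, Ideal.Quotient.eq_zero_iff_mem]
    exact Ideal.mem_span_singleton_self _
  constructor
  · intro h
    obtain ⟨c, rfl⟩ := Nat.exists_eq_add_of_le hak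
    rw [coeff_opGenFun_eq_of_mk_eq (Nat.lt_succ_self n)
      (map_opGenFun_gordonSet_eq_of_lt φ hφ n.succ_pos ha (by omega : 0 < c))]
    congr 1
    ext p
    simp only [restrictedSet, IsOverPtn, Set.mem_ofPred_eq, Nat.le_zero, forall_eq, Set.mem_univ]
    tauto
  · rintro rfl
    rw [coeff_opGenFun_eq_of_mk_eq (Nat.lt_succ_self n)
      (map_opGenFun_gordonSet_eq_self φ hφ n.succ_pos ha)]
    congr 1
    ext p
    simp only [restrictedSet, IsOverPtn, Set.mem_ofPred_eq, Nat.le_zero, forall_eq,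
      Nat.add_pos_iff_pos_or_pos, or_imp, forall_and]
    tauto
end
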